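/- (Unique continuation Carleman inequality.) There exist absolute constants C₀ ≥ 1 and C ≥ 1 such that the following holds. Let T > 0, ρ > 0 with ρ² ≥ 4000T, let 𝒞 := {(t,x) ∈ ℝ × ℝ³ : t ∈ [0,T], |x| ≤ ρ}, and let u : 𝒞 → ℝ³ be smooth (on an open neighborhood of 𝒞) obeying |Lu| ≤ (1/(C₀T))|u| + (1/(C₀T)^{1/2})|∇u| on 𝒞, where L := ∂ₜ + Δ (spatial Laplacian, componentwise). Then for any 0 < t₁ ≤ t₀ ≤ T/1000, one has ∫_{t₀}^{2t₀} ∫_{|x| ≤ ρ/2} ( T^{−1}|u|² + |∇u|² ) e^{−|x|²/(4t)} dx dt ≤ C ( e^{−ρ²/(500 t₀)} X + t₀^{3/2} (e t₀/t₁)^{C ρ²/t₀} Y ), where X := ∫_0^T ∫_{|x| ≤ ρ} ( T^{−1}|u|² + |∇u|² ) dx dt and Y := ∫_{|x| ≤ ρ} |u(0,x)|² t₁^{−3/2} e^{−|x|²/(4t₁)} dx. -/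

import Mathlib

noncomputable section

open MeasureTheory Real Set

/-- Spatial partial derivative in the `i`-th coordinate direction. -/
def pdg {d : ℕ} (i : Fin d) (f : EuclideanSpace ℝ (Fin d) → ℝ)
    (x : EuclideanSpace ℝ (Fin d)) : ℝ :=
  fderiv ℝ f x (EuclideanSpace.single i 1)

/-- Spatial Laplacian. -/
def lapg {d : ℕ} (f : EuclideanSpace ℝ (Fin d) → ℝ) (x : EuclideanSpace ℝ (Fin d)) : ℝ :=
  ∑ i, pdg i (pdg i f) x

/-- Time derivative. -/
def tdg {d : ℕ} (f : ℝ → EuclideanSpace ℝ (Fin d) → ℝ) (t : ℝ)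
    (x : EuclideanSpace ℝ (Fin d)) : ℝ :=
  deriv (fun s => f s x) t

/-- The backward heat operator `L = ∂ₜ + Δ` acting on scalar functions. -/
def bheat {d : ℕ} (f : ℝ → EuclideanSpace ℝ (Fin d) → ℝ) (t : ℝ)
    (x : EuclideanSpace ℝ (Fin d)) : ℝ :=
  tdg f t x + lapg (f t) x

/-- Three-dimensional Euclidean space. -/
abbrev E3 : Type := EuclideanSpace ℝ (Fin 3)


/-! ### Smooth extension of `u` -/

open Topology Filter in
lemma exists_global_ext {K U : Set (ℝ × E3)} (hK : IsClosed K) (hU : IsOpen U) (hKU : K ⊆ U)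
    {f : ℝ × E3 → E3} (hf : ContDiffOn ℝ (⊤ : ℕ∞) f U) :
    ∃ F : ℝ × E3 → E3, ContDiff ℝ (⊤ : ℕ∞) F ∧ ∀ z ∈ K, F =ᶠ[𝓝 z] f := by
  obtain ⟨χ, h0, h1, -⟩ := exists_contMDiffMap_zero_one_nhds_of_isClosed
    (modelWithCornersSelf ℝ (ℝ × E3)) (n := (⊤ : ℕ∞)) hU.isClosed_compl hK
    (disjoint_left.2 fun z hz hz' => hz (hKU hz'))
  have hχ : ContDiff ℝ (⊤ : ℕ∞) (fun z => χ z) := χ.contMDiff.contDiff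
  refine ⟨fun z => χ z • f z, ?_, ?_⟩
  · rw [contDiff_iff_contDiffAt]
    intro z
    by_cases hz : z ∈ U
    · exact hχ.contDiffAt.smul (hf.contDiffAt (hU.mem_nhds hz))
    · have h := (eventually_nhdsSet_iff_forall.1 h0) z hz
      refine (contDiffAt_const (c := (0 : E3))).congr_of_eventuallyEq ?_
      filter_upwards [h] with y hy
      simp [hy]
  · intro z hz
    have h := (eventually_nhdsSet_iff_forall.1 h1) z hz
    filter_upwards [h] with y hy
    simp [hy]

/-! ### Directional derivatives on space-time -/

/-- time derivative -/
def dT (f : ℝ × E3 → ℝ) (z : ℝ × E3) : ℝ := fderiv ℝ f z (1, 0)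

/-- space derivative -/
def dX (i : Fin 3) (f : ℝ × E3 → ℝ) (z : ℝ × E3) : ℝ :=
  fderiv ℝ f z (0, EuclideanSpace.single i 1)

lemma contDiff_dT {f : ℝ × E3 → ℝ} (hf : ContDiff ℝ (⊤ : ℕ∞) f) :
    ContDiff ℝ (⊤ : ℕ∞) (dT f) := by
  have : ContDiff ℝ (⊤ : ℕ∞) (fderiv ℝ f) := hf.fderiv_right (by simp)
  exact this.clm_apply contDiff_const

lemma contDiff_dX {f : ℝ × E3 → ℝ} (hf : ContDiff ℝ (⊤ : ℕ∞) f) (i : Fin 3) :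
    ContDiff ℝ (⊤ : ℕ∞) (dX i f) := by
  have : ContDiff ℝ (⊤ : ℕ∞) (fderiv ℝ f) := hf.fderiv_right (by simp)
  exact this.clm_apply contDiff_const

lemma smooth_diff {f : ℝ × E3 → ℝ} (hf : ContDiff ℝ (⊤ : ℕ∞) f) : Differentiable ℝ f :=
  hf.differentiable (by simp)

lemma dir_symm {f : ℝ × E3 → ℝ} (hf : ContDiff ℝ (⊤ : ℕ∞) f) (a b z : ℝ × E3) :
    fderiv ℝ (fun z => fderiv ℝ f z a) z b = fderiv ℝ (fun z => fderiv ℝ f z b) z a := by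
  have h1 : ContDiff ℝ (⊤ : ℕ∞) (fderiv ℝ f) := hf.fderiv_right (by simp)
  have h2 : DifferentiableAt ℝ (fderiv ℝ f) z := h1.differentiable (by simp) z
  have hs : IsSymmSndFDerivAt ℝ f z :=
    hf.contDiffAt.isSymmSndFDerivAt (by simp [minSmoothness_of_isRCLikeNormedField]; exact WithTop.coe_le_coe.2 (le_top : (2 : ℕ∞) ≤ ⊤))
  have key : ∀ c d : ℝ × E3, fderiv ℝ (fun z => fderiv ℝ f z c) z d
      = fderiv ℝ (fderiv ℝ f) z d c := by
    intro c d
    rw [fderiv_clm_apply h2 (differentiableAt_const c)]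
    simp
  rw [key, key]
  exact hs.eq b a

lemma dT_dX_comm {f : ℝ × E3 → ℝ} (hf : ContDiff ℝ (⊤ : ℕ∞) f) (i : Fin 3) (z : ℝ × E3) :
    dT (dX i f) z = dX i (dT f) z := dir_symm hf _ _ z

lemma dX_dX_comm {f : ℝ × E3 → ℝ} (hf : ContDiff ℝ (⊤ : ℕ∞) f) (i j : Fin 3) (z : ℝ × E3) :
    dX i (dX j f) z = dX j (dX i f) z := dir_symm hf _ _ z

lemma hasDerivAt_time {f : ℝ × E3 → ℝ} (hf : Differentiable ℝ f) (t : ℝ) (x : E3) :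
    HasDerivAt (fun s => f (s, x)) (dT f (t, x)) t := by
  have h1 : HasDerivAt (fun s : ℝ => (s, x)) ((1 : ℝ), (0 : E3)) t :=
    (hasDerivAt_id t).prodMk (hasDerivAt_const t x)
  exact (hf (t, x)).hasFDerivAt.comp_hasDerivAt t h1

lemma hasFDerivAt_space {f : ℝ × E3 → ℝ} (hf : Differentiable ℝ f) (t : ℝ) (x : E3) :
    HasFDerivAt (fun y => f (t, y))
      ((fderiv ℝ f (t, x)).comp (ContinuousLinearMap.inr ℝ ℝ E3)) x :=
  (hf (t, x)).hasFDerivAt.comp x (hasFDerivAt_prodMk_right t x)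

lemma hasLineDerivAt_space {f : ℝ × E3 → ℝ} (hf : Differentiable ℝ f) (t : ℝ) (x : E3)
    (i : Fin 3) :
    HasDerivAt (fun τ : ℝ => f (t, x + τ • EuclideanSpace.single i (1 : ℝ))) (dX i f (t, x)) 0 := by
  have h := (hasFDerivAt_space hf t x).hasLineDerivAt (EuclideanSpace.single i (1 : ℝ))
  exact h

lemma pdg_eq {f : ℝ × E3 → ℝ} (hf : Differentiable ℝ f) (i : Fin 3) (t : ℝ) (x : E3) :
    pdg i (fun y => f (t, y)) x = dX i f (t, x) := by
  unfold pdg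
  rw [(hasFDerivAt_space hf t x).fderiv]
  rfl

lemma bheat_eq {f : ℝ × E3 → ℝ} (hf : ContDiff ℝ (⊤ : ℕ∞) f) (t : ℝ) (x : E3) :
    bheat (fun s y => f (s, y)) t x = dT f (t, x) + ∑ i, dX i (dX i f) (t, x) := by
  unfold bheat tdg lapg
  rw [(hasDerivAt_time (smooth_diff hf) t x).deriv]
  congr 1
  refine Finset.sum_congr rfl fun i _ => ?_
  have : pdg i (fun y => f (t, y)) = fun y => dX i f (t, y) :=
    funext fun y => pdg_eq (smooth_diff hf) i t y
  rw [this]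
  exact pdg_eq (smooth_diff (contDiff_dX hf i)) i t x

/-- The integral of a directional derivative of a compactly supported function vanishes. -/
lemma integral_lineDeriv_zero {V V' : E3 → ℝ} {e : E3} {ρ : ℝ}
    (hV : Continuous V) (hV' : Continuous V')
    (h0 : ∀ x, ρ < ‖x‖ → V x = 0)
    (hd : ∀ x, HasDerivAt (fun τ : ℝ => V (x + τ • e)) (V' x) 0) :
    ∫ x in {x : E3 | ‖x‖ ≤ ρ}, V' x = 0 := by
  have hopen : IsOpen {x : E3 | ρ < ‖x‖} := isOpen_lt continuous_const continuous_norm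
  have h0' : ∀ x, ρ < ‖x‖ → V' x = 0 := by
    intro x hx
    have hc : Continuous (fun τ : ℝ => x + τ • e) := by fun_prop
    have : (fun τ : ℝ => V (x + τ • e)) =ᶠ[nhds 0] fun _ => 0 := by
      have : ∀ᶠ τ : ℝ in nhds 0, x + τ • e ∈ {x : E3 | ρ < ‖x‖} := by
        apply hc.continuousAt.eventually_mem
        apply hopen.mem_nhds
        simpa using hx
      filter_upwards [this] with τ hτ using h0 _ hτ
    have h1 := (hd x).congr_of_eventuallyEq this.symm
    exact h1.unique (hasDerivAt_const _ _)
  have hsup : ∀ W : E3 → ℝ, (∀ x, ρ < ‖x‖ → W x = 0) → HasCompactSupport W := by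
    intro W hW
    refine HasCompactSupport.intro (isCompact_closedBall (0 : E3) ρ) fun x hx => hW x ?_
    simpa using hx
  rw [setIntegral_eq_integral_of_forall_compl_eq_zero]
  swap
  · intro x hx
    exact h0' x (by simpa using hx)
  let b : ContDiffBump (0 : E3) := ⟨|ρ| + 1, |ρ| + 2, by positivity, by linarith⟩
  have hb1 : ∀ x : E3, ‖x‖ ≤ ρ → b x = 1 := fun x hx =>
    b.one_of_mem_closedBall (by
      show x ∈ Metric.closedBall 0 (|ρ| + 1)
      simp; linarith [le_abs_self ρ])
  have hbev : ∀ x : E3, ‖x‖ ≤ ρ → (b : E3 → ℝ) =ᶠ[nhds x] 1 := fun x hx =>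
    b.eventuallyEq_one_of_mem_ball (by
      show x ∈ Metric.ball 0 (|ρ| + 1)
      simp; linarith [le_abs_self ρ])
  have hbd : Differentiable ℝ (b : E3 → ℝ) := (b.contDiff (n := 1)).differentiable (by simp)
  have e1 : ∀ x, fderiv ℝ b x e * V x = 0 := by
    intro x
    by_cases hx : ρ < ‖x‖
    · rw [h0 x hx, mul_zero]
    · rw [(hbev x (not_lt.1 hx)).fderiv_eq]
      have : fderiv ℝ (1 : E3 → ℝ) x = 0 := fderiv_const_apply (1 : ℝ)
      simp [this]
  have e2 : ∀ x, b x * V' x = V' x := by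
    intro x
    by_cases hx : ρ < ‖x‖
    · rw [h0' x hx, mul_zero]
    · rw [hb1 x (not_lt.1 hx), one_mul]
  have e3 : ∀ x, b x * V x = V x := by
    intro x
    by_cases hx : ρ < ‖x‖
    · rw [h0 x hx, mul_zero]
    · rw [hb1 x (not_lt.1 hx), one_mul]
  have key := integral_bilinear_hasLineDerivAt_right_eq_neg_left_of_integrable
    (μ := (volume : Measure E3)) (f := (b : E3 → ℝ)) (f' := fun x => fderiv ℝ b x e)
    (g := V) (g' := V') (v := e) (B := ContinuousLinearMap.mul ℝ ℝ)
    (by simp only [ContinuousLinearMap.mul_apply', e1]; exact integrable_zero _ _ _)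
    (by simp only [ContinuousLinearMap.mul_apply', e2]
        exact hV'.integrable_of_hasCompactSupport (hsup _ h0'))
    (by simp only [ContinuousLinearMap.mul_apply', e3]
        exact hV.integrable_of_hasCompactSupport (hsup _ h0))
    (fun x _ => (hbd x).hasFDerivAt.hasLineDerivAt e)
    (fun x _ => hd x)
  simpa only [ContinuousLinearMap.mul_apply', e1, e2, integral_zero, neg_zero] using key


/-! ### The Carleman weight -/

/-- time part of the weight -/
def cA (α S s : ℝ) : ℝ := s ^ (-(3 / 2 + α)) * Real.exp (2 * α * s / S)

/-- the full weight -/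
def cG (α S t₁ : ℝ) (z : ℝ × E3) : ℝ :=
  cA α S (z.1 + t₁) * Real.exp (-((z.2 0) ^ 2 + (z.2 1) ^ 2 + (z.2 2) ^ 2) / (4 * (z.1 + t₁)))

/-- the function `F` -/
def cF (α S s : ℝ) : ℝ := -α / s + 2 * α / S

/-- the multiplier -/
def cw (S s : ℝ) : ℝ := s * (1 + s / S)

lemma hasDerivAt_cA (α S s : ℝ) (hs : 0 < s) :
    HasDerivAt (cA α S) ((-(3 / 2 + α) / s + 2 * α / S) * cA α S s) s := by
  unfold cA
  have h1 := Real.hasDerivAt_rpow_const (x := s) (p := -(3 / 2 + α)) (Or.inl hs.ne')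
  have h2 : HasDerivAt (fun s => Real.exp (2 * α * s / S))
      (Real.exp (2 * α * s / S) * (2 * α * 1 / S)) s :=
    (((hasDerivAt_id s).const_mul (2 * α)).div_const S).exp
  refine (h1.mul h2).congr_deriv ?_
  rw [Real.rpow_sub_one hs.ne']
  field_simp

lemma hasDerivAt_cG (α S t₁ t : ℝ) (x : E3) (hs : 0 < t + t₁) :
    HasDerivAt (fun t => cG α S t₁ (t, x))
      ((((x 0) ^ 2 + (x 1) ^ 2 + (x 2) ^ 2) / (4 * (t + t₁) ^ 2)
        + (-(3 / 2 + α) / (t + t₁) + 2 * α / S)) * cG α S t₁ (t, x)) t := by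
  unfold cG
  simp only
  have h0 : HasDerivAt (fun t : ℝ => t + t₁) 1 t := (hasDerivAt_id t).add_const t₁
  have h1 := (hasDerivAt_cA α S (t + t₁) hs).comp t h0
  have h2 : HasDerivAt (fun t : ℝ => -((x 0) ^ 2 + (x 1) ^ 2 + (x 2) ^ 2) / (4 * (t + t₁)))
      (((x 0) ^ 2 + (x 1) ^ 2 + (x 2) ^ 2) / (4 * (t + t₁) ^ 2)) t := by
    have := (hasDerivAt_const t (-((x 0) ^ 2 + (x 1) ^ 2 + (x 2) ^ 2))).div (h0.const_mul 4)
      (by positivity)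
    refine this.congr_deriv ?_
    field_simp
    ring
  refine (h1.mul h2.exp).congr_deriv ?_
  simp only [Function.comp]
  ring

lemma hasDerivAt_cF (α S t₁ t : ℝ) (hs : 0 < t + t₁) :
    HasDerivAt (fun t => cF α S (t + t₁)) (α / (t + t₁) ^ 2) t := by
  unfold cF
  have h0 : HasDerivAt (fun t : ℝ => t + t₁) 1 t := (hasDerivAt_id t).add_const t₁
  refine (((hasDerivAt_const t (-α)).div h0 hs.ne').add_const (2 * α / S)).congr_deriv ?_
  field_simp
  ring

lemma hasDerivAt_cw (S t₁ t : ℝ) :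
    HasDerivAt (fun t => cw S (t + t₁)) (1 + 2 * (t + t₁) / S) t := by
  unfold cw
  have h0 : HasDerivAt (fun t : ℝ => t + t₁) 1 t := (hasDerivAt_id t).add_const t₁
  refine (h0.mul ((h0.div_const S).const_add 1)).congr_deriv ?_
  ring

/-- one-dimensional computation for the flux -/
lemma flux_deriv {v P q0 q1 q2 x0 x1 x2 qi xi : ℝ → ℝ}
    {v' P' q0' q1' q2' x0' x1' x2' qi' xi' s w F A : ℝ}
    (hv : HasDerivAt v v' 0) (hP : HasDerivAt P P' 0)
    (h0 : HasDerivAt q0 q0' 0) (h1 : HasDerivAt q1 q1' 0) (h2 : HasDerivAt q2 q2' 0)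
    (k0 : HasDerivAt x0 x0' 0) (k1 : HasDerivAt x1 x1' 0) (k2 : HasDerivAt x2 x2' 0)
    (hi : HasDerivAt qi qi' 0) (ki : HasDerivAt xi xi' 0) :
    HasDerivAt (fun τ => w * (2 * P τ * qi τ
        + (x0 τ * q0 τ + x1 τ * q1 τ + x2 τ * q2 τ) / s * qi τ
        - xi τ / (2 * s) * (q0 τ ^ 2 + q1 τ ^ 2 + q2 τ ^ 2)
        + F * v τ * qi τ - F / 2 * v τ ^ 2 * (xi τ / (2 * s)))
        * (A * Real.exp (-(x0 τ ^ 2 + x1 τ ^ 2 + x2 τ ^ 2) / (4 * s))))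
      (w * (2 * P' * qi 0 + 2 * P 0 * qi'
        + (x0' * q0 0 + x1' * q1 0 + x2' * q2 0 + x0 0 * q0' + x1 0 * q1' + x2 0 * q2') / s * qi 0
        + (x0 0 * q0 0 + x1 0 * q1 0 + x2 0 * q2 0) / s * qi'
        - xi' / (2 * s) * (q0 0 ^ 2 + q1 0 ^ 2 + q2 0 ^ 2)
        - xi 0 / (2 * s) * (2 * q0 0 * q0' + 2 * q1 0 * q1' + 2 * q2 0 * q2')
        + F * v' * qi 0 + F * v 0 * qi' - F * v 0 * v' * (xi 0 / (2 * s))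
        - F / 2 * v 0 ^ 2 * (xi' / (2 * s))
        - (x0 0 * x0' + x1 0 * x1' + x2 0 * x2') / (2 * s) *
          (2 * P 0 * qi 0
        + (x0 0 * q0 0 + x1 0 * q1 0 + x2 0 * q2 0) / s * qi 0
        - xi 0 / (2 * s) * (q0 0 ^ 2 + q1 0 ^ 2 + q2 0 ^ 2)
        + F * v 0 * qi 0 - F / 2 * v 0 ^ 2 * (xi 0 / (2 * s))))
        * (A * Real.exp (-(x0 0 ^ 2 + x1 0 ^ 2 + x2 0 ^ 2) / (4 * s)))) 0 := by
  have e1 := ((((k0.mul h0).add (k1.mul h1)).add (k2.mul h2)).div_const s).mul hi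
  have e2 := (ki.div_const (2 * s)).mul (((h0.pow 2).add (h1.pow 2)).add (h2.pow 2))
  have e3 := (hv.const_mul F).mul hi
  have e4 := ((hv.pow 2).const_mul (F / 2)).mul (ki.div_const (2 * s))
  have e5 := (hP.const_mul 2).mul hi
  have e6 := ((((k0.pow 2).add (k1.pow 2)).add (k2.pow 2)).neg.div_const (4 * s)).exp.const_mul A
  have e7 := (((((e5.add e1).sub e2).add e3).sub e4).const_mul w).mul e6
  refine e7.congr_deriv ?_
  simp only [Pi.add_apply, Pi.mul_apply, Pi.pow_apply, Pi.neg_apply, Pi.sub_apply]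
  push_cast
  ring

/-- the flux, with `i`-th component -/
def flux (α S t₁ : ℝ) (v : ℝ × E3 → ℝ) (i : Fin 3) (z : ℝ × E3) : ℝ :=
  cw S (z.1 + t₁) * (2 * dT v z * dX i v z
    + (z.2 0 * dX 0 v z + z.2 1 * dX 1 v z + z.2 2 * dX 2 v z) / (z.1 + t₁) * dX i v z
    - z.2 i / (2 * (z.1 + t₁)) * (dX 0 v z ^ 2 + dX 1 v z ^ 2 + dX 2 v z ^ 2)
    + cF α S (z.1 + t₁) * v z * dX i v z
    - cF α S (z.1 + t₁) / 2 * v z ^ 2 * (z.2 i / (2 * (z.1 + t₁)))) * cG α S t₁ z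

/-- the divergence terms of the flux -/
def dflux (α S t₁ : ℝ) (v : ℝ × E3 → ℝ) (i : Fin 3) (z : ℝ × E3) : ℝ :=
  cw S (z.1 + t₁) * (2 * dX i (dT v) z * dX i v z + 2 * dT v z * dX i (dX i v) z
    + ((EuclideanSpace.single i (1 : ℝ) : E3) 0 * dX 0 v z
      + (EuclideanSpace.single i (1 : ℝ) : E3) 1 * dX 1 v z
      + (EuclideanSpace.single i (1 : ℝ) : E3) 2 * dX 2 v z
      + z.2 0 * dX i (dX 0 v) z + z.2 1 * dX i (dX 1 v) z + z.2 2 * dX i (dX 2 v) z)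
      / (z.1 + t₁) * dX i v z
    + (z.2 0 * dX 0 v z + z.2 1 * dX 1 v z + z.2 2 * dX 2 v z) / (z.1 + t₁) * dX i (dX i v) z
    - (EuclideanSpace.single i (1 : ℝ) : E3) i / (2 * (z.1 + t₁))
      * (dX 0 v z ^ 2 + dX 1 v z ^ 2 + dX 2 v z ^ 2)
    - z.2 i / (2 * (z.1 + t₁)) * (2 * dX 0 v z * dX i (dX 0 v) z
      + 2 * dX 1 v z * dX i (dX 1 v) z + 2 * dX 2 v z * dX i (dX 2 v) z)
    + cF α S (z.1 + t₁) * dX i v z * dX i v z + cF α S (z.1 + t₁) * v z * dX i (dX i v) z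
    - cF α S (z.1 + t₁) * v z * dX i v z * (z.2 i / (2 * (z.1 + t₁)))
    - cF α S (z.1 + t₁) / 2 * v z ^ 2
      * ((EuclideanSpace.single i (1 : ℝ) : E3) i / (2 * (z.1 + t₁)))
    - (z.2 0 * (EuclideanSpace.single i (1 : ℝ) : E3) 0
      + z.2 1 * (EuclideanSpace.single i (1 : ℝ) : E3) 1
      + z.2 2 * (EuclideanSpace.single i (1 : ℝ) : E3) 2) / (2 * (z.1 + t₁)) *
      (2 * dT v z * dX i v z
      + (z.2 0 * dX 0 v z + z.2 1 * dX 1 v z + z.2 2 * dX 2 v z) / (z.1 + t₁) * dX i v z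
      - z.2 i / (2 * (z.1 + t₁)) * (dX 0 v z ^ 2 + dX 1 v z ^ 2 + dX 2 v z ^ 2)
      + cF α S (z.1 + t₁) * v z * dX i v z
      - cF α S (z.1 + t₁) / 2 * v z ^ 2 * (z.2 i / (2 * (z.1 + t₁)))))
    * cG α S t₁ z

lemma hasDerivAt_flux (α S t₁ : ℝ) {v : ℝ × E3 → ℝ} (hv : ContDiff ℝ (⊤ : ℕ∞) v) (i : Fin 3)
    (t : ℝ) (x : E3) :
    HasDerivAt (fun τ : ℝ => flux α S t₁ v i (t, x + τ • EuclideanSpace.single i (1 : ℝ)))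
      (dflux α S t₁ v i (t, x)) 0 := by
  have hx : ∀ j : Fin 3, HasDerivAt
      (fun τ : ℝ => (x + τ • (EuclideanSpace.single i (1 : ℝ) : E3)) j)
      ((EuclideanSpace.single i (1 : ℝ) : E3) j) 0 := by
    intro j
    have : HasDerivAt (fun τ : ℝ => x j + τ * (EuclideanSpace.single i (1 : ℝ) : E3) j)
        (1 * (EuclideanSpace.single i (1 : ℝ) : E3) j) 0 :=
      ((hasDerivAt_id (0 : ℝ)).mul_const _).const_add _
    simpa using this
  have hq : ∀ j : Fin 3, _ := fun j =>
    hasLineDerivAt_space (smooth_diff (contDiff_dX hv j)) t x i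
  have h := flux_deriv (s := t + t₁) (w := cw S (t + t₁)) (F := cF α S (t + t₁))
    (A := cA α S (t + t₁)) (hasLineDerivAt_space (smooth_diff hv) t x i)
    (hasLineDerivAt_space (smooth_diff (contDiff_dT hv)) t x i)
    (hq 0) (hq 1) (hq 2) (hx 0) (hx 1) (hx 2) (hq i) (hx i)
  simp only [zero_smul, add_zero] at h
  exact h

/-- the energy density -/
def dens (α S t₁ : ℝ) (v : ℝ × E3 → ℝ) (z : ℝ × E3) : ℝ :=
  cw S (z.1 + t₁) * (dX 0 v z ^ 2 + dX 1 v z ^ 2 + dX 2 v z ^ 2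
    + cF α S (z.1 + t₁) / 2 * v z ^ 2) * cG α S t₁ z

/-- its time derivative -/
def ddens (α S t₁ : ℝ) (v : ℝ × E3 → ℝ) (z : ℝ × E3) : ℝ :=
  ((1 + 2 * (z.1 + t₁) / S) * (dX 0 v z ^ 2 + dX 1 v z ^ 2 + dX 2 v z ^ 2
    + cF α S (z.1 + t₁) / 2 * v z ^ 2)
  + cw S (z.1 + t₁) * (2 * dX 0 v z * dX 0 (dT v) z + 2 * dX 1 v z * dX 1 (dT v) z
    + 2 * dX 2 v z * dX 2 (dT v) z + α / (z.1 + t₁) ^ 2 / 2 * v z ^ 2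
    + cF α S (z.1 + t₁) * v z * dT v z)
  + cw S (z.1 + t₁) * (dX 0 v z ^ 2 + dX 1 v z ^ 2 + dX 2 v z ^ 2
    + cF α S (z.1 + t₁) / 2 * v z ^ 2) *
    (((z.2 0) ^ 2 + (z.2 1) ^ 2 + (z.2 2) ^ 2) / (4 * (z.1 + t₁) ^ 2)
        + (-(3 / 2 + α) / (z.1 + t₁) + 2 * α / S))) * cG α S t₁ z

lemma hasDerivAt_dens (α S t₁ : ℝ) {v : ℝ × E3 → ℝ} (hv : ContDiff ℝ (⊤ : ℕ∞) v)
    (t : ℝ) (x : E3) (hs : 0 < t + t₁) :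
    HasDerivAt (fun t => dens α S t₁ v (t, x)) (ddens α S t₁ v (t, x)) t := by
  have hq : ∀ j : Fin 3, HasDerivAt (fun s => dX j v (s, x)) (dX j (dT v) (t, x)) t := fun j => by
    have := hasDerivAt_time (smooth_diff (contDiff_dX hv j)) t x
    rwa [dT_dX_comm hv] at this
  have h0 := hasDerivAt_time (smooth_diff hv) t x
  have hF := hasDerivAt_cF α S t₁ t hs
  have e1 := ((((hq 0).pow 2).add ((hq 1).pow 2)).add ((hq 2).pow 2)).add
    ((hF.div_const 2).mul (h0.pow 2))
  have e2 := ((hasDerivAt_cw S t₁ t).mul e1).mul (hasDerivAt_cG α S t₁ t x hs)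
  refine e2.congr_deriv ?_
  simp only [Pi.add_apply, Pi.mul_apply, Pi.pow_apply, ddens]
  push_cast
  ring

/-- the pointwise Carleman identity -/
lemma carleman_pointwise (α S t₁ : ℝ) (hS : 0 < S) {v : ℝ × E3 → ℝ}
    (hv : ContDiff ℝ (⊤ : ℕ∞) v) (z : ℝ × E3) (hs : 0 < z.1 + t₁) :
    ddens α S t₁ v z =
      ((z.1 + t₁) / S * (dX 0 v z ^ 2 + dX 1 v z ^ 2 + dX 2 v z ^ 2)
        + α * (1 + 4 * (z.1 + t₁) / S) / (2 * S) * v z ^ 2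
        + 2 * cw S (z.1 + t₁) * ((dX 0 (dX 0 v) z + dX 1 (dX 1 v) z + dX 2 (dX 2 v) z)
            - (z.2 0 * dX 0 v z + z.2 1 * dX 1 v z + z.2 2 * dX 2 v z) / (2 * (z.1 + t₁))
            - cF α S (z.1 + t₁) / 2 * v z
            - (dT v z + (dX 0 (dX 0 v) z + dX 1 (dX 1 v) z + dX 2 (dX 2 v) z)) / 2) ^ 2
        - cw S (z.1 + t₁) / 2 *
          (dT v z + (dX 0 (dX 0 v) z + dX 1 (dX 1 v) z + dX 2 (dX 2 v) z)) ^ 2) * cG α S t₁ z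
      + (dflux α S t₁ v 0 z + dflux α S t₁ v 1 z + dflux α S t₁ v 2 z) := by
  have c1 := dX_dX_comm hv 1 0 z
  have c2 := dX_dX_comm hv 2 0 z
  have c3 := dX_dX_comm hv 2 1 z
  simp only [ddens, dflux, c1, c2, c3]
  simp only [PiLp.single_apply]
  norm_num [Fin.ext_iff]
  simp only [cF, cw]
  generalize z.1 + t₁ = s at *
  have hs' := hs.ne'
  have hS' := hS.ne'
  rw [← sub_eq_zero]
  field_simp
  ring


/-- closed ball -/
def BB (ρ : ℝ) : Set E3 := {x : E3 | ‖x‖ ≤ ρ}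

lemma isCompact_BB (ρ : ℝ) : IsCompact (BB ρ) := by
  have : BB ρ = Metric.closedBall 0 ρ := by ext; simp [BB]
  rw [this]; exact isCompact_closedBall _ _

lemma measurableSet_BB (ρ : ℝ) : MeasurableSet (BB ρ) := (isCompact_BB ρ).measurableSet

/-- the time half-space where the weight is regular -/
def OO (t₁ : ℝ) : Set (ℝ × E3) := {z | 0 < z.1 + t₁}

lemma contOn_inv (t₁ : ℝ) : ContinuousOn (fun z : ℝ × E3 => (z.1 + t₁)⁻¹) (OO t₁) :=
  ContinuousOn.inv₀ (by fun_prop) fun z (hz : 0 < z.1 + t₁) => hz.ne'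

lemma contOn_cA (α S t₁ : ℝ) : ContinuousOn (fun z : ℝ × E3 => cA α S (z.1 + t₁)) (OO t₁) := by
  unfold cA
  refine ContinuousOn.mul (ContinuousOn.rpow_const (by fun_prop)
    fun z (hz : 0 < z.1 + t₁) => Or.inl hz.ne') ?_
  fun_prop

lemma contOn_cG (α S t₁ : ℝ) : ContinuousOn (cG α S t₁) (OO t₁) := by
  unfold cG
  have h := contOn_inv t₁
  refine (contOn_cA α S t₁).mul ?_
  simp only [div_eq_mul_inv, mul_inv]
  fun_prop

lemma contOn_cF (α S t₁ : ℝ) : ContinuousOn (fun z : ℝ × E3 => cF α S (z.1 + t₁)) (OO t₁) := by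
  unfold cF
  have h := contOn_inv t₁
  simp only [div_eq_mul_inv]
  fun_prop

lemma contOn_cw (S t₁ : ℝ) : Continuous (fun z : ℝ × E3 => cw S (z.1 + t₁)) := by
  unfold cw
  fun_prop

/-- main part of the Carleman inequality -/
def mainI (α S t₁ : ℝ) (v : ℝ × E3 → ℝ) (z : ℝ × E3) : ℝ :=
  ((z.1 + t₁) / S * (dX 0 v z ^ 2 + dX 1 v z ^ 2 + dX 2 v z ^ 2)
    + α * (1 + 4 * (z.1 + t₁) / S) / (2 * S) * v z ^ 2
    - cw S (z.1 + t₁) / 2 *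
      (dT v z + (dX 0 (dX 0 v) z + dX 1 (dX 1 v) z + dX 2 (dX 2 v) z)) ^ 2) * cG α S t₁ z

section
variable {α S t₁ : ℝ} {v : ℝ × E3 → ℝ}

lemma contOn_mainI (hv : ContDiff ℝ (⊤ : ℕ∞) v) : ContinuousOn (mainI α S t₁ v) (OO t₁) := by
  have h1 := contOn_cG α S t₁
  have h3 := hv.continuous
  have h4 := fun i => (contDiff_dX hv i).continuous
  have h5 := fun i => (contDiff_dX (contDiff_dX hv i) i).continuous
  have h6 := (contDiff_dT hv).continuous
  unfold mainI
  simp only [cw]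
  fun_prop

lemma contOn_dens (hv : ContDiff ℝ (⊤ : ℕ∞) v) : ContinuousOn (dens α S t₁ v) (OO t₁) := by
  have h1 := contOn_cG α S t₁
  have h3 := hv.continuous
  have h4 := fun i => (contDiff_dX hv i).continuous
  have h := contOn_inv t₁
  unfold dens
  simp only [cF, cw, div_eq_mul_inv]
  fun_prop

lemma contOn_ddens (hv : ContDiff ℝ (⊤ : ℕ∞) v) : ContinuousOn (ddens α S t₁ v) (OO t₁) := by
  have h1 := contOn_cG α S t₁
  have h3 := hv.continuous
  have h4 := fun i => (contDiff_dX hv i).continuous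
  have h5 := fun i => (contDiff_dX (contDiff_dT hv) i).continuous
  have h6 := (contDiff_dT hv).continuous
  have h := contOn_inv t₁
  unfold ddens
  simp only [cF, cw, div_eq_mul_inv, mul_inv, ← inv_pow]
  fun_prop

lemma contOn_flux (hv : ContDiff ℝ (⊤ : ℕ∞) v) (i : Fin 3) :
    ContinuousOn (flux α S t₁ v i) (OO t₁) := by
  have h1 := contOn_cG α S t₁
  have h3 := hv.continuous
  have h4 := fun i => (contDiff_dX hv i).continuous
  have h6 := (contDiff_dT hv).continuous
  have h := contOn_inv t₁
  unfold flux
  simp only [cF, cw, div_eq_mul_inv, mul_inv, ← inv_pow]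
  fun_prop

lemma contOn_dflux (hv : ContDiff ℝ (⊤ : ℕ∞) v) (i : Fin 3) :
    ContinuousOn (dflux α S t₁ v i) (OO t₁) := by
  have h1 := contOn_cG α S t₁
  have h3 := hv.continuous
  have h4 := fun i => (contDiff_dX hv i).continuous
  have h5 := fun i j => (contDiff_dX (contDiff_dX hv i) j).continuous
  have h5' := fun i => (contDiff_dX (contDiff_dT hv) i).continuous
  have h6 := (contDiff_dT hv).continuous
  have h := contOn_inv t₁
  unfold dflux
  simp only [cF, cw, div_eq_mul_inv, mul_inv, ← inv_pow]
  fun_prop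

lemma slice_cont {f : ℝ × E3 → ℝ} (hf : ContinuousOn f (OO t₁)) {t : ℝ} (ht : 0 < t + t₁) :
    Continuous (fun x => f (t, x)) :=
  hf.comp_continuous (by fun_prop) fun _ => ht

lemma intOn_prod {f : ℝ × E3 → ℝ} (hf : ContinuousOn f (OO t₁)) (ht₁ : 0 < t₁) (a b ρ : ℝ)
    (ha : 0 ≤ a) : IntegrableOn f (Icc a b ×ˢ BB ρ) := by
  refine ContinuousOn.integrableOn_compact (isCompact_Icc.prod (isCompact_BB ρ)) (hf.mono ?_)
  rintro z ⟨hz, -⟩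
  have := hz.1
  show 0 < z.1 + t₁
  linarith

lemma intOn_slice {f : ℝ × E3 → ℝ} (hf : ContinuousOn f (OO t₁)) (ρ : ℝ) {t : ℝ}
    (ht : 0 < t + t₁) : IntegrableOn (fun x => f (t, x)) (BB ρ) :=
  (slice_cont hf ht).continuousOn.integrableOn_compact (isCompact_BB ρ)

lemma flux_zero {ρ : ℝ} (h0 : ∀ z : ℝ × E3, ρ < ‖z.2‖ → v z = 0) (i : Fin 3) (z : ℝ × E3)
    (hz : ρ < ‖z.2‖) : flux α S t₁ v i z = 0 := by
  have hopen : IsOpen {z : ℝ × E3 | ρ < ‖z.2‖} :=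
    isOpen_lt continuous_const (by fun_prop)
  have hev : v =ᶠ[nhds z] fun _ => 0 := by
    filter_upwards [hopen.mem_nhds hz] with y hy using h0 y hy
  have hfd : fderiv ℝ v z = 0 := by rw [hev.fderiv_eq]; simp
  have hd : ∀ j, dX j v z = 0 := fun j => by simp [dX, hfd]
  unfold flux
  simp [hd, h0 z hz]

lemma integral_dflux (hv : ContDiff ℝ (⊤ : ℕ∞) v) {ρ : ℝ}
    (h0 : ∀ z : ℝ × E3, ρ < ‖z.2‖ → v z = 0) (i : Fin 3) {t : ℝ} (ht : 0 < t + t₁) :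
    ∫ x in BB ρ, dflux α S t₁ v i (t, x) = 0 :=
  integral_lineDeriv_zero (V := fun x => flux α S t₁ v i (t, x))
    (slice_cont (contOn_flux hv i) ht) (slice_cont (contOn_dflux hv i) ht)
    (fun x hx => flux_zero h0 i (t, x) hx) (fun x => hasDerivAt_flux α S t₁ hv i t x)

lemma cG_pos {z : ℝ × E3} (hs : 0 < z.1 + t₁) : 0 < cG α S t₁ z := by
  unfold cG cA
  positivity

/-- integrated Carleman inequality -/
lemma carleman_int (hv : ContDiff ℝ (⊤ : ℕ∞) v) {ρ T₀ : ℝ} (hS : 0 < S) (ht₁ : 0 < t₁)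
    (hT₀ : 0 ≤ T₀) (h0 : ∀ z : ℝ × E3, ρ < ‖z.2‖ → v z = 0) :
    ∫ z in Icc 0 T₀ ×ˢ BB ρ, mainI α S t₁ v z ≤
      (∫ x in BB ρ, dens α S t₁ v (T₀, x)) - ∫ x in BB ρ, dens α S t₁ v (0, x) := by
  have i1 : IntegrableOn (mainI α S t₁ v) (Icc 0 T₀ ×ˢ BB ρ) :=
    intOn_prod (contOn_mainI hv) ht₁ _ _ _ le_rfl
  have i2 : IntegrableOn (ddens α S t₁ v) (Icc 0 T₀ ×ˢ BB ρ) :=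
    intOn_prod (contOn_ddens hv) ht₁ _ _ _ le_rfl
  have hpos : ∀ t ∈ Icc 0 T₀, 0 < t + t₁ := fun t ht => by linarith [ht.1]
  have step1 : ∫ z in Icc 0 T₀ ×ˢ BB ρ, mainI α S t₁ v z ≤
      ∫ z in Icc 0 T₀ ×ˢ BB ρ, ddens α S t₁ v z := by
    rw [Measure.volume_eq_prod] at i1 i2 ⊢
    rw [setIntegral_prod _ i1, setIntegral_prod _ i2]
    have j1 := i1
    have j2 := i2
    rw [IntegrableOn, ← Measure.prod_restrict] at j1 j2
    refine setIntegral_mono_on j1.integral_prod_left j2.integral_prod_left measurableSet_Icc ?_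
    intro t ht
    have hs := hpos t ht
    have hf : ∫ x in BB ρ, (dflux α S t₁ v 0 (t, x) + dflux α S t₁ v 1 (t, x)
        + dflux α S t₁ v 2 (t, x)) = 0 := by
      have k := fun i => intOn_slice (contOn_dflux (α := α) (S := S) (t₁ := t₁) hv i) ρ hs
      rw [integral_add (f := fun x => dflux α S t₁ v 0 (t, x) + dflux α S t₁ v 1 (t, x))
        ((k 0).add (k 1)) (k 2), integral_add (k 0) (k 1),
        integral_dflux hv h0 0 hs, integral_dflux hv h0 1 hs, integral_dflux hv h0 2 hs]
      simp
    have k := fun i => intOn_slice (contOn_dflux (α := α) (S := S) (t₁ := t₁) hv i) ρ hs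
    have k1 := intOn_slice (contOn_mainI (α := α) (S := S) (t₁ := t₁) hv) ρ hs
    have k2 := intOn_slice (contOn_ddens (α := α) (S := S) (t₁ := t₁) hv) ρ hs
    calc ∫ x in BB ρ, mainI α S t₁ v (t, x)
        = ∫ x in BB ρ, (mainI α S t₁ v (t, x) + (dflux α S t₁ v 0 (t, x)
          + dflux α S t₁ v 1 (t, x) + dflux α S t₁ v 2 (t, x))) := by
          rw [integral_add (g := fun x => dflux α S t₁ v 0 (t, x) + dflux α S t₁ v 1 (t, x)
            + dflux α S t₁ v 2 (t, x)) k1 (((k 0).add (k 1)).add (k 2)), hf, add_zero]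
      _ ≤ _ := by
          refine setIntegral_mono_on (k1.add (((k 0).add (k 1)).add (k 2))) k2
            (measurableSet_BB ρ) ?_
          intro x _
          rw [carleman_pointwise α S t₁ hS hv (t, x) hs]
          have hG := (cG_pos (α := α) (S := S) (z := (t, x)) hs).le
          have hw : 0 ≤ cw S (t + t₁) := by unfold cw; positivity
          unfold mainI
          refine add_le_add (mul_le_mul_of_nonneg_right ?_ hG) le_rfl
          set Q := ((dX 0 (dX 0 v) (t, x) + dX 1 (dX 1 v) (t, x) + dX 2 (dX 2 v) (t, x))
            - (x 0 * dX 0 v (t, x) + x 1 * dX 1 v (t, x) + x 2 * dX 2 v (t, x)) / (2 * (t + t₁))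
            - cF α S (t + t₁) / 2 * v (t, x)
            - (dT v (t, x) + (dX 0 (dX 0 v) (t, x) + dX 1 (dX 1 v) (t, x)
              + dX 2 (dX 2 v) (t, x))) / 2)
          have : 0 ≤ 2 * cw S (t + t₁) * Q ^ 2 := by positivity
          linarith
  refine step1.trans (le_of_eq ?_)
  have d1 := intOn_slice (contOn_dens (α := α) (S := S) (t₁ := t₁) hv) ρ (hpos T₀ ⟨hT₀, le_rfl⟩)
  have d2 := intOn_slice (contOn_dens (α := α) (S := S) (t₁ := t₁) hv) ρ (hpos 0 ⟨le_rfl, hT₀⟩)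
  rw [← integral_sub d1 d2]
  rw [Measure.volume_eq_prod] at i2 ⊢
  rw [setIntegral_prod _ i2]
  have j2 := i2
  rw [IntegrableOn, ← Measure.prod_restrict] at j2
  rw [integral_integral_swap (f := fun t x => ddens α S t₁ v (t, x)) j2]
  refine setIntegral_congr_fun (measurableSet_BB ρ) fun x _ => ?_
  rw [integral_Icc_eq_integral_Ioc, ← intervalIntegral.integral_of_le hT₀]
  refine intervalIntegral.integral_eq_sub_of_hasDerivAt
    (f := fun t => dens α S t₁ v (t, x)) (f' := fun t => ddens α S t₁ v (t, x)) ?_ ?_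
  · intro t ht
    rw [uIcc_of_le hT₀] at ht
    exact hasDerivAt_dens α S t₁ hv t x (hpos t ht)
  · refine ContinuousOn.intervalIntegrable ?_
    rw [uIcc_of_le hT₀]
    exact (contOn_ddens hv).comp (by fun_prop) fun t ht => hpos t ht

end


/-! ### The spatial cutoff -/

/-- fixed bump -/
def chi : ContDiffBump (0 : E3) := ⟨5 / 8, 3 / 4, by norm_num, by norm_num⟩

/-- rescaled cutoff, as function on space-time -/
def psi (ρ : ℝ) (z : ℝ × E3) : ℝ := chi (ρ⁻¹ • z.2)

lemma contDiff_psi (ρ : ℝ) : ContDiff ℝ (⊤ : ℕ∞) (psi ρ) := by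
  have h : ContDiff ℝ (⊤ : ℕ∞) (chi : E3 → ℝ) := chi.contDiff
  exact h.comp (by fun_prop)

lemma hasFDerivAt_scaled {h : E3 → ℝ} (hh : Differentiable ℝ h) (ρ : ℝ) (z : ℝ × E3) :
    HasFDerivAt (fun z : ℝ × E3 => h (ρ⁻¹ • z.2))
      ((fderiv ℝ h (ρ⁻¹ • z.2)).comp (ρ⁻¹ • ContinuousLinearMap.snd ℝ ℝ E3)) z :=
  (hh (ρ⁻¹ • z.2)).hasFDerivAt.comp z (hasFDerivAt_snd.const_smul ρ⁻¹)

lemma dX_scaled {h : E3 → ℝ} (hh : Differentiable ℝ h) (ρ : ℝ) (i : Fin 3) (z : ℝ × E3) :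
    dX i (fun z : ℝ × E3 => h (ρ⁻¹ • z.2)) z
      = ρ⁻¹ * fderiv ℝ h (ρ⁻¹ • z.2) (EuclideanSpace.single i 1) := by
  unfold dX
  rw [(hasFDerivAt_scaled hh ρ z).fderiv]
  simp

lemma dX_const_mul {h : ℝ × E3 → ℝ} (hh : Differentiable ℝ h) (c : ℝ) (i : Fin 3)
    (z : ℝ × E3) : dX i (fun z => c * h z) z = c * dX i h z := by
  unfold dX
  rw [fderiv_const_mul (hh z)]
  simp

lemma dT_psi (ρ : ℝ) (z : ℝ × E3) : dT (psi ρ) z = 0 := by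
  unfold dT psi
  rw [(hasFDerivAt_scaled ((chi.contDiff (n := 1)).differentiable (by simp)) ρ z).fderiv]
  simp

lemma psi_bounds : ∃ M : ℝ, 1 ≤ M ∧ ∀ ρ : ℝ, 0 < ρ → ∀ (i : Fin 3) (z : ℝ × E3),
    |dX i (psi ρ) z| ≤ M / ρ ∧ |dX i (dX i (psi ρ)) z| ≤ M / ρ ^ 2 := by
  have hc : ContDiff ℝ (⊤ : ℕ∞) (chi : E3 → ℝ) := chi.contDiff
  let e : Fin 3 → E3 := fun i => EuclideanSpace.single i 1
  let c1 : Fin 3 → E3 → ℝ := fun i y => fderiv ℝ chi y (e i)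
  let c2 : Fin 3 → E3 → ℝ := fun i y => fderiv ℝ (c1 i) y (e i)
  have s1 : ∀ i, ContDiff ℝ (⊤ : ℕ∞) (c1 i) := fun i =>
    (hc.fderiv_right (m := (⊤ : ℕ∞)) (by simp)).clm_apply contDiff_const
  have s2 : ∀ i, ContDiff ℝ (⊤ : ℕ∞) (c2 i) := fun i =>
    ((s1 i).fderiv_right (m := (⊤ : ℕ∞)) (by simp)).clm_apply contDiff_const
  have k1 : ∀ i, HasCompactSupport (c1 i) := fun i =>
    chi.hasCompactSupport.fderiv_apply (𝕜 := ℝ) (e i)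
  have k2 : ∀ i, HasCompactSupport (c2 i) := fun i => (k1 i).fderiv_apply (𝕜 := ℝ) (e i)
  have b1 : ∀ i, ∃ C, ∀ y, ‖c1 i y‖ ≤ C := fun i =>
    (k1 i).exists_bound_of_continuous (s1 i).continuous
  have b2 : ∀ i, ∃ C, ∀ y, ‖c2 i y‖ ≤ C := fun i =>
    (k2 i).exists_bound_of_continuous (s2 i).continuous
  choose C1 h1 using b1
  choose C2 h2 using b2
  have n1 : ∀ i, 0 ≤ C1 i := fun i => (norm_nonneg _).trans (h1 i 0)
  have n2 : ∀ i, 0 ≤ C2 i := fun i => (norm_nonneg _).trans (h2 i 0)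
  refine ⟨1 + ∑ i, (C1 i + C2 i), ?_, ?_⟩
  · have : 0 ≤ ∑ i, (C1 i + C2 i) := Finset.sum_nonneg fun i _ => add_nonneg (n1 i) (n2 i)
    linarith
  intro ρ hρ i z
  have hM : C1 i + C2 i ≤ ∑ i, (C1 i + C2 i) :=
    Finset.single_le_sum (f := fun i => C1 i + C2 i)
      (fun i _ => add_nonneg (n1 i) (n2 i)) (Finset.mem_univ i)
  have d1 : dX i (psi ρ) = fun z => ρ⁻¹ * c1 i (ρ⁻¹ • z.2) :=
    funext fun z => dX_scaled (hc.differentiable (by simp)) ρ i z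
  have d2 : dX i (dX i (psi ρ)) z = ρ⁻¹ * (ρ⁻¹ * c2 i (ρ⁻¹ • z.2)) := by
    have hd : Differentiable ℝ (c1 i) := (s1 i).differentiable (by simp)
    rw [d1, dX_const_mul (h := fun z : ℝ × E3 => c1 i (ρ⁻¹ • z.2))
      (fun z => (hasFDerivAt_scaled hd ρ z).differentiableAt),
      dX_scaled hd ρ i z]
  have hρ' : 0 < ρ⁻¹ := inv_pos.2 hρ
  constructor
  · rw [d1]
    simp only [abs_mul, abs_of_pos hρ', div_eq_inv_mul]
    have := h1 i (ρ⁻¹ • z.2)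
    rw [Real.norm_eq_abs] at this
    gcongr
    linarith [n2 i]
  · rw [d2]
    simp only [abs_mul, abs_of_pos hρ', div_eq_inv_mul, ← mul_assoc]
    have := h2 i (ρ⁻¹ • z.2)
    rw [Real.norm_eq_abs] at this
    rw [← sq, inv_pow]
    gcongr
    linarith [n1 i]

lemma psi_abs (ρ : ℝ) (z : ℝ × E3) : psi ρ z ^ 2 ≤ 1 := by
  have h1 : 0 ≤ psi ρ z := chi.nonneg
  have h2 : psi ρ z ≤ 1 := chi.le_one
  nlinarith

lemma psi_zero {ρ : ℝ} (hρ : 0 < ρ) (z : ℝ × E3) (hz : ρ < ‖z.2‖) : psi ρ z = 0 := by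
  apply chi.zero_of_le_dist
  show (3 / 4 : ℝ) ≤ _
  rw [dist_zero_right, norm_smul, Real.norm_eq_abs, abs_of_pos (inv_pos.2 hρ),
    ← div_eq_inv_mul, le_div_iff₀ hρ]
  linarith

lemma psi_one {ρ : ℝ} (hρ : 0 < ρ) (z : ℝ × E3) (hz : ‖z.2‖ ≤ ρ / 2) :
    psi ρ =ᶠ[nhds z] fun _ => 1 := by
  have hopen : IsOpen {z : ℝ × E3 | ‖z.2‖ < 5 / 8 * ρ} :=
    isOpen_lt (by fun_prop) continuous_const
  have hz' : z ∈ {z : ℝ × E3 | ‖z.2‖ < 5 / 8 * ρ} := by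
    show ‖z.2‖ < 5 / 8 * ρ
    linarith
  filter_upwards [hopen.mem_nhds hz'] with y hy
  apply chi.one_of_mem_closedBall
  show _ ∈ Metric.closedBall (0 : E3) (5 / 8)
  rw [mem_closedBall_zero_iff, norm_smul, Real.norm_eq_abs, abs_of_pos (inv_pos.2 hρ),
    ← div_eq_inv_mul, div_le_iff₀ hρ]
  exact le_of_lt hy

/-- heat operator on space-time -/
def LL (f : ℝ × E3 → ℝ) (z : ℝ × E3) : ℝ :=
  dT f z + (dX 0 (dX 0 f) z + dX 1 (dX 1 f) z + dX 2 (dX 2 f) z)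

/-- squared gradient -/
def GG (f : ℝ × E3 → ℝ) (z : ℝ × E3) : ℝ := dX 0 f z ^ 2 + dX 1 f z ^ 2 + dX 2 f z ^ 2

lemma GG_nonneg (f : ℝ × E3 → ℝ) (z : ℝ × E3) : 0 ≤ GG f z := by unfold GG; positivity

lemma dX_mul {f g : ℝ × E3 → ℝ} (hf : Differentiable ℝ f) (hg : Differentiable ℝ g) (i : Fin 3)
    (z : ℝ × E3) : dX i (fun z => f z * g z) z = f z * dX i g z + g z * dX i f z := by
  unfold dX
  rw [fderiv_fun_mul (hf z) (hg z)]
  simp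

lemma dT_mul {f g : ℝ × E3 → ℝ} (hf : Differentiable ℝ f) (hg : Differentiable ℝ g)
    (z : ℝ × E3) : dT (fun z => f z * g z) z = f z * dT g z + g z * dT f z := by
  unfold dT
  rw [fderiv_fun_mul (hf z) (hg z)]
  simp

lemma dX_add {f g : ℝ × E3 → ℝ} (hf : Differentiable ℝ f) (hg : Differentiable ℝ g) (i : Fin 3)
    (z : ℝ × E3) : dX i (fun z => f z + g z) z = dX i f z + dX i g z := by
  unfold dX
  rw [fderiv_fun_add (hf z) (hg z)]
  simp

lemma dXX_mul {f g : ℝ × E3 → ℝ} (hf : ContDiff ℝ (⊤ : ℕ∞) f) (hg : ContDiff ℝ (⊤ : ℕ∞) g)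
    (i : Fin 3) (z : ℝ × E3) :
    dX i (dX i (fun z => f z * g z)) z
      = f z * dX i (dX i g) z + 2 * dX i f z * dX i g z + g z * dX i (dX i f) z := by
  have e : dX i (fun z => f z * g z) = fun z => f z * dX i g z + g z * dX i f z :=
    funext fun z => dX_mul (smooth_diff hf) (smooth_diff hg) i z
  have a1 := smooth_diff (contDiff_dX hf i)
  have a2 := smooth_diff (contDiff_dX hg i)
  have a3 := smooth_diff hf
  have a4 := smooth_diff hg
  rw [e, dX_add (f := fun z => f z * dX i g z) (g := fun z => g z * dX i f z)
    (a3.mul a2) (a4.mul a1), dX_mul a3 a2, dX_mul a4 a1]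
  ring

lemma eventually_ops {f g : ℝ × E3 → ℝ} {z : ℝ × E3} (h : f =ᶠ[nhds z] g) :
    f z = g z ∧ (∀ i, dX i f z = dX i g z) ∧ LL f z = LL g z := by
  have h1 : ∀ i, dX i f =ᶠ[nhds z] dX i g := fun i => by
    filter_upwards [h.eventuallyEq_nhds] with y hy
    unfold dX
    rw [hy.fderiv_eq]
  refine ⟨h.eq_of_nhds, fun i => (h1 i).eq_of_nhds, ?_⟩
  have h2 : ∀ i, dX i (dX i f) z = dX i (dX i g) z := fun i => by
    show fderiv ℝ (dX i f) z _ = fderiv ℝ (dX i g) z _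
    rw [(h1 i).fderiv_eq]
  unfold LL
  rw [h2, h2, h2]
  unfold dT
  rw [h.fderiv_eq]

lemma near_ops {ρ : ℝ} (hρ : 0 < ρ) (f : ℝ × E3 → ℝ) (z : ℝ × E3) (hz : ‖z.2‖ ≤ ρ / 2) :
    psi ρ z * f z = f z ∧ GG (fun z => psi ρ z * f z) z = GG f z ∧
      LL (fun z => psi ρ z * f z) z = LL f z := by
  have h : (fun z => psi ρ z * f z) =ᶠ[nhds z] f := by
    filter_upwards [psi_one hρ z hz] with y hy
    rw [hy, one_mul]
  obtain ⟨a, b, c⟩ := eventually_ops h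
  refine ⟨a, ?_, c⟩
  unfold GG
  rw [b, b, b]

lemma far_ops {M ρ : ℝ}
    (hb : ∀ (i : Fin 3) (z : ℝ × E3),
      |dX i (psi ρ) z| ≤ M / ρ ∧ |dX i (dX i (psi ρ)) z| ≤ M / ρ ^ 2)
    {f : ℝ × E3 → ℝ} (hf : ContDiff ℝ (⊤ : ℕ∞) f) (z : ℝ × E3) :
    (psi ρ z * f z) ^ 2 ≤ f z ^ 2 ∧
    GG (fun z => psi ρ z * f z) z ≤ 2 * GG f z + 6 * (M / ρ) ^ 2 * f z ^ 2 ∧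
    LL (fun z => psi ρ z * f z) z ^ 2
      ≤ 3 * LL f z ^ 2 + 36 * (M / ρ) ^ 2 * GG f z + 27 * (M / ρ ^ 2) ^ 2 * f z ^ 2 := by
  have hp := psi_abs ρ z
  have hs := contDiff_psi ρ
  have m1 : ∀ i, dX i (psi ρ) z ^ 2 ≤ (M / ρ) ^ 2 := fun i =>
    sq_le_sq' (abs_le.1 (hb i z).1).1 (abs_le.1 (hb i z).1).2
  have eX := fun i => dX_mul (smooth_diff hs) (smooth_diff hf) i z
  refine ⟨?_, ?_, ?_⟩
  · rw [mul_pow]; nlinarith [sq_nonneg (f z)]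
  · have key : ∀ i, dX i (fun z => psi ρ z * f z) z ^ 2
        ≤ 2 * dX i f z ^ 2 + 2 * (M / ρ) ^ 2 * f z ^ 2 := by
      intro i
      rw [eX i]
      have a1 : (psi ρ z * dX i f z) ^ 2 ≤ dX i f z ^ 2 := by
        rw [mul_pow]; nlinarith [sq_nonneg (dX i f z)]
      have a2 : (f z * dX i (psi ρ) z) ^ 2 ≤ (M / ρ) ^ 2 * f z ^ 2 := by
        rw [mul_pow, mul_comm]; exact mul_le_mul_of_nonneg_right (m1 i) (sq_nonneg _)
      nlinarith [sq_nonneg (psi ρ z * dX i f z - f z * dX i (psi ρ) z)]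
    unfold GG
    nlinarith [key 0, key 1, key 2]
  · have e : LL (fun z => psi ρ z * f z) z = psi ρ z * LL f z
        + 2 * (dX 0 (psi ρ) z * dX 0 f z + dX 1 (psi ρ) z * dX 1 f z + dX 2 (psi ρ) z * dX 2 f z)
        + f z * (dX 0 (dX 0 (psi ρ)) z + dX 1 (dX 1 (psi ρ)) z + dX 2 (dX 2 (psi ρ)) z) := by
      unfold LL
      rw [dT_mul (smooth_diff hs) (smooth_diff hf), dT_psi, dXX_mul hs hf, dXX_mul hs hf,
        dXX_mul hs hf]
      ring
    rw [e]
    have g1 : ∀ i, (dX i (psi ρ) z * dX i f z) ^ 2 ≤ (M / ρ) ^ 2 * dX i f z ^ 2 := fun i => by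
      rw [mul_pow]; exact mul_le_mul_of_nonneg_right (m1 i) (sq_nonneg _)
    have g2 : (dX 0 (psi ρ) z * dX 0 f z + dX 1 (psi ρ) z * dX 1 f z
        + dX 2 (psi ρ) z * dX 2 f z) ^ 2 ≤ 3 * (M / ρ) ^ 2 * GG f z := by
      have := g1 0
      have := g1 1
      have := g1 2
      unfold GG
      generalize dX 0 (psi ρ) z * dX 0 f z = a at *
      generalize dX 1 (psi ρ) z * dX 1 f z = b at *
      generalize dX 2 (psi ρ) z * dX 2 f z = c at *
      nlinarith [sq_nonneg (a - b), sq_nonneg (a - c), sq_nonneg (b - c)]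
    have g3 : (f z * (dX 0 (dX 0 (psi ρ)) z + dX 1 (dX 1 (psi ρ)) z
        + dX 2 (dX 2 (psi ρ)) z)) ^ 2 ≤ 9 * (M / ρ ^ 2) ^ 2 * f z ^ 2 := by
      have h0 := abs_le.1 (hb 0 z).2
      have h1 := abs_le.1 (hb 1 z).2
      have h2 := abs_le.1 (hb 2 z).2
      have : (dX 0 (dX 0 (psi ρ)) z + dX 1 (dX 1 (psi ρ)) z
        + dX 2 (dX 2 (psi ρ)) z) ^ 2 ≤ (3 * (M / ρ ^ 2)) ^ 2 :=
        sq_le_sq' (by linarith [h0.1, h1.1, h2.1]) (by linarith [h0.2, h1.2, h2.2])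
      rw [mul_pow, mul_comm]
      calc _ ≤ (3 * (M / ρ ^ 2)) ^ 2 * f z ^ 2 := mul_le_mul_of_nonneg_right this (sq_nonneg _)
        _ = _ := by ring
    have g0 : (psi ρ z * LL f z) ^ 2 ≤ LL f z ^ 2 := by
      rw [mul_pow]; nlinarith [sq_nonneg (LL f z)]
    generalize psi ρ z * LL f z = a at *
    generalize dX 0 (psi ρ) z * dX 0 f z + dX 1 (psi ρ) z * dX 1 f z
        + dX 2 (psi ρ) z * dX 2 f z = b at *
    generalize f z * (dX 0 (dX 0 (psi ρ)) z + dX 1 (dX 1 (psi ρ)) z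
        + dX 2 (dX 2 (psi ρ)) z) = c at *
    nlinarith [sq_nonneg (a - 2 * b), sq_nonneg (a - c), sq_nonneg (2 * b - c)]


/-! ### Numerical lemmas -/

lemma exp_two_lt : Real.exp 2 < 8 := by
  have h := Real.exp_one_lt_d9
  have h0 := Real.exp_pos 1
  have : Real.exp 2 = Real.exp 1 ^ 2 := by rw [← Real.exp_nat_mul]; norm_num
  rw [this]; nlinarith

lemma exp_five_lt : Real.exp 5 < 1000 / 6 := by
  have h := Real.exp_one_lt_d9
  have h0 := Real.exp_pos 1
  have : Real.exp 5 = Real.exp 1 ^ 5 := by rw [← Real.exp_nat_mul]; norm_num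
  rw [this]
  calc Real.exp 1 ^ 5 ≤ 2.7182818286 ^ 5 := by gcongr
    _ < _ := by norm_num

/-- if `x ≤ exp c` then `x ^ a ≤ exp (c * a)`. -/
lemma rpow_le_exp {x c a : ℝ} (hx : 0 ≤ x) (ha : 0 ≤ a) (h : x ≤ Real.exp c) :
    x ^ a ≤ Real.exp (c * a) := by
  rw [Real.exp_mul]
  exact Real.rpow_le_rpow hx h ha

lemma num1 {α t₀ T s : ℝ} (hα : 10000 ≤ α) (ht₀ : 0 < t₀) (hT : 0 < T) (hs : 0 < s)
    (hsT : s ≤ 1.001 * T) :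
    s * (s ^ (-(3 / 2 + α)) * Real.exp (2 * α * s / (2 * T)) * Real.exp (-(25 * α * t₀ / s)))
      ≤ 3 * t₀ * (3 * t₀) ^ (-(3 / 2 + α)) * Real.exp (-(0.8 * α)) := by
  set y := 3 * t₀ / s with hy
  have hy0 : 0 < y := by positivity
  have h3 : 3 * t₀ = y * s := by rw [hy]; field_simp
  have hα0 : 0 ≤ α := by linarith
  rw [h3, Real.mul_rpow hy0.le hs.le]
  have e1 : 2 * α * s / (2 * T) ≤ 1.001 * α := by
    rw [div_le_iff₀ (by positivity)]
    nlinarith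
  have e2 : 25 * α * t₀ / s = 25 / 3 * α * y := by rw [hy]; field_simp
  rw [e2]
  -- reduce to `exp(..) ≤ y * y^(-(3/2+α)) * exp(-0.8 α)`
  have hyp : y * y ^ (-(3 / 2 + α)) = (y ^ (1 / 2 + α))⁻¹ := by
    rw [← Real.rpow_neg hy0.le, ← Real.rpow_one_add' hy0.le (by linarith)]
    congr 1; ring
  have k1 : y ^ α ≤ Real.exp ((8 * y - 3) * α) := by
    refine rpow_le_exp hy0.le hα0 ?_
    have a1 : 8 * y ≤ Real.exp (8 * y - 1) := by linarith [Real.add_one_le_exp (8 * y - 1)]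
    have a2 : Real.exp (8 * y - 1) = Real.exp (8 * y - 3) * Real.exp 2 := by
      rw [← Real.exp_add]; ring_nf
    nlinarith [exp_two_lt, Real.exp_pos (8 * y - 3)]
  have k2 : y ^ (1 / 2 : ℝ) ≤ Real.exp (y * (1 / 2)) :=
    rpow_le_exp hy0.le (by norm_num) (by linarith [Real.add_one_le_exp y])
  have k3 : y ^ (1 / 2 + α) ≤ Real.exp (y * (1 / 2) + (8 * y - 3) * α) := by
    rw [Real.rpow_add hy0, Real.exp_add]
    exact mul_le_mul k2 k1 (by positivity) (by positivity)
  have hpos : 0 < y ^ (1 / 2 + α) := by positivity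
  have hsr : 0 < s ^ (-(3 / 2 + α)) := by positivity
  have key : Real.exp (2 * α * s / (2 * T)) * Real.exp (-(25 / 3 * α * y))
      ≤ (y ^ (1 / 2 + α))⁻¹ * Real.exp (-(0.8 * α)) := by
    rw [← div_eq_inv_mul, le_div_iff₀ hpos]
    calc _ ≤ Real.exp (2 * α * s / (2 * T)) * Real.exp (-(25 / 3 * α * y)) *
          Real.exp (y * (1 / 2) + (8 * y - 3) * α) := by gcongr
      _ = Real.exp (2 * α * s / (2 * T) + -(25 / 3 * α * y) + (y * (1 / 2) + (8 * y - 3) * α)) := by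
          rw [← Real.exp_add, ← Real.exp_add]
      _ ≤ _ := by
          apply Real.exp_le_exp.2
          nlinarith
  calc _ = s * s ^ (-(3 / 2 + α)) * (Real.exp (2 * α * s / (2 * T)) *
        Real.exp (-(25 / 3 * α * y))) := by ring
    _ ≤ s * s ^ (-(3 / 2 + α)) * ((y ^ (1 / 2 + α))⁻¹ * Real.exp (-(0.8 * α))) := by gcongr
    _ = _ := by rw [← hyp]; ring

lemma num2 {α t₀ T s : ℝ} (hα : 10000 ≤ α) (ht₀ : 0 < t₀) (hT : t₀ ≤ T / 1000)
    (hs : T / 2 ≤ s) (hsT : s ≤ 1.001 * T) :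
    α * cA α (2 * T) s
      ≤ 6 * (t₀ / T) * (3 * t₀) ^ (-(3 / 2 + α)) * Real.exp (-(0.8 * α)) := by
  have hT0 : 0 < T := by linarith
  have hs0 : 0 < s := by linarith
  have hα0 : 0 ≤ α := by linarith
  unfold cA
  set y := 3 * t₀ / s with hy
  have hy0 : 0 < y := by positivity
  have h3 : 3 * t₀ = y * s := by rw [hy]; field_simp
  rw [h3, Real.mul_rpow hy0.le hs0.le]
  have e1 : 2 * α * s / (2 * T) ≤ 1.001 * α := by
    rw [div_le_iff₀ (by positivity)]
    nlinarith
  have y1 : y ≤ 6 * (t₀ / T) := by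
    rw [hy, div_le_iff₀ hs0]
    have : 6 * (t₀ / T) * (T / 2) = 3 * t₀ := by field_simp; norm_num
    rw [← this]; gcongr
  have y2 : t₀ / T ≤ 1 / 1000 := by rw [div_le_iff₀ hT0]; linarith
  have y3 : y ≤ 6 / 1000 := by linarith
  have k1 : y ^ α ≤ Real.exp (-5 * α) := by
    refine rpow_le_exp hy0.le hα0 ?_
    have : Real.exp (-5) * Real.exp 5 = 1 := by rw [← Real.exp_add]; simp
    nlinarith [exp_five_lt, Real.exp_pos (-5)]
  have k2 : y ^ (3 / 2 : ℝ) ≤ 6 * (t₀ / T) := by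
    refine le_trans ?_ y1
    calc y ^ (3 / 2 : ℝ) ≤ y ^ (1 : ℝ) :=
          Real.rpow_le_rpow_of_exponent_ge hy0 (by linarith) (by norm_num)
      _ = y := Real.rpow_one y
  have k3 : y ^ (3 / 2 + α) ≤ 6 * (t₀ / T) * Real.exp (-5 * α) := by
    rw [Real.rpow_add hy0]
    exact mul_le_mul k2 k1 (by positivity) (by positivity)
  have k4 : α ≤ Real.exp α := by linarith [Real.add_one_le_exp α]
  have hpos : 0 < y ^ (3 / 2 + α) := by positivity
  have hsr : 0 < s ^ (-(3 / 2 + α)) := by positivity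
  have key : α * Real.exp (2 * α * s / (2 * T)) ≤
      6 * (t₀ / T) * (y ^ (3 / 2 + α))⁻¹ * Real.exp (-(0.8 * α)) := by
    have : 6 * (t₀ / T) * (y ^ (3 / 2 + α))⁻¹ * Real.exp (-(0.8 * α))
        = 6 * (t₀ / T) * Real.exp (-(0.8 * α)) / (y ^ (3 / 2 + α)) := by
      rw [div_eq_mul_inv]; ring
    rw [this, le_div_iff₀ hpos]
    calc _ ≤ Real.exp α * Real.exp (2 * α * s / (2 * T)) * (6 * (t₀ / T) * Real.exp (-5 * α)) := by
          gcongr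
      _ = 6 * (t₀ / T) * Real.exp (α + 2 * α * s / (2 * T) + -5 * α) := by
          rw [Real.exp_add, Real.exp_add]; ring
      _ ≤ _ := by
          gcongr
          nlinarith
  calc _ = s ^ (-(3 / 2 + α)) * (α * Real.exp (2 * α * s / (2 * T))) := by ring
    _ ≤ s ^ (-(3 / 2 + α)) * (6 * (t₀ / T) * (y ^ (3 / 2 + α))⁻¹ * Real.exp (-(0.8 * α))) := by
        gcongr
    _ = _ := by rw [← Real.rpow_neg hy0.le]; ring

lemma num3 {α t₀ t₁ T : ℝ} (hα : 10000 ≤ α) (ht₁ : 0 < t₁) (ht : t₁ ≤ t₀) (hT : t₀ ≤ T / 1000)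
    (hTα : T / t₀ ≤ α / 10) {C : ℝ} (hC : 1 ≤ C) :
    (4 * T / t₀) * (3 * t₀) ^ (3 / 2 + α) * (α / 2 * cA α (2 * T) t₁) ≤
      3 * (t₀ ^ ((3 : ℝ) / 2) * (Real.exp 1 * t₀ / t₁) ^ (C * (400 * α)) * t₁ ^ (-(3 : ℝ) / 2)) := by
  have ht₀ : 0 < t₀ := by linarith
  have hT0 : 0 < T := by linarith
  have hα0 : 0 ≤ α := by linarith
  unfold cA
  have a1 : (3 * t₀) ^ (3 / 2 + α) = 3 ^ (3 / 2 : ℝ) * 3 ^ α * (t₀ ^ (3 / 2 : ℝ) * t₀ ^ α) := by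
    rw [Real.mul_rpow (by norm_num) ht₀.le, Real.rpow_add (by norm_num), Real.rpow_add ht₀]
  have a2 : t₁ ^ (-(3 / 2 + α)) = t₁ ^ (-(3 : ℝ) / 2) * (t₁ ^ α)⁻¹ := by
    rw [← Real.rpow_neg ht₁.le, ← Real.rpow_add ht₁]
    congr 1; ring
  have a3 : (t₀ / t₁) ^ α = t₀ ^ α * (t₁ ^ α)⁻¹ := by
    rw [Real.div_rpow ht₀.le ht₁.le, div_eq_mul_inv]
  have e2 : (3 : ℝ) ≤ Real.exp 2 := by linarith [Real.add_one_le_exp 2]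
  have b1 : (3 : ℝ) ^ α ≤ Real.exp (2 * α) := rpow_le_exp (by norm_num) hα0 e2
  have b2 : (3 : ℝ) ^ (3 / 2 : ℝ) ≤ 6 := by
    have : (3 : ℝ) ^ (3 / 2 : ℝ) = 3 * 3 ^ (1 / 2 : ℝ) := by
      rw [← Real.rpow_one_add' (by norm_num) (by norm_num)]; norm_num
    rw [this, ← Real.sqrt_eq_rpow]
    have : Real.sqrt 3 ≤ 2 := by rw [Real.sqrt_le_left (by norm_num)]; norm_num
    linarith
  have b3 : 2 * α * t₁ / (2 * T) ≤ α := by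
    rw [div_le_iff₀ (by positivity)]; nlinarith
  have b4 : α ^ 2 ≤ 2 * Real.exp α := by
    have := Real.quadratic_le_exp_of_nonneg hα0
    nlinarith
  have r1 : 1 ≤ t₀ / t₁ := by rw [le_div_iff₀ ht₁]; linarith
  have b5 : Real.exp (4 * α) * (t₀ / t₁) ^ α ≤ (Real.exp 1 * t₀ / t₁) ^ (C * (400 * α)) := by
    rw [mul_div_assoc, Real.mul_rpow (by positivity) (by positivity), ← Real.exp_mul, one_mul]
    have : 4 * α ≤ C * (400 * α) := by nlinarith
    gcongr
    linarith
  calc _ = (2 * α * (T / t₀)) * 3 ^ (3 / 2 : ℝ) * 3 ^ α * Real.exp (2 * α * t₁ / (2 * T))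
        * (t₀ / t₁) ^ α * (t₀ ^ (3 / 2 : ℝ) * t₁ ^ (-(3 : ℝ) / 2)) := by
        rw [a1, a2, a3]; ring
    _ ≤ (2 * α * (α / 10)) * 6 * Real.exp (2 * α) * Real.exp α
        * (t₀ / t₁) ^ α * (t₀ ^ (3 / 2 : ℝ) * t₁ ^ (-(3 : ℝ) / 2)) := by
        gcongr
    _ = (α ^ 2 * 1.2) * (Real.exp (2 * α) * Real.exp α)
        * (t₀ / t₁) ^ α * (t₀ ^ (3 / 2 : ℝ) * t₁ ^ (-(3 : ℝ) / 2)) := by ring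
    _ ≤ (2 * Real.exp α * 1.2) * (Real.exp (2 * α) * Real.exp α)
        * (t₀ / t₁) ^ α * (t₀ ^ (3 / 2 : ℝ) * t₁ ^ (-(3 : ℝ) / 2)) := by
        gcongr
    _ = 2.4 * (Real.exp (4 * α) * (t₀ / t₁) ^ α) * (t₀ ^ (3 / 2 : ℝ) * t₁ ^ (-(3 : ℝ) / 2)) := by
        have : Real.exp (4 * α) = Real.exp α * (Real.exp (2 * α) * Real.exp α) := by
          rw [← Real.exp_add, ← Real.exp_add]; ring_nf
        rw [this]; ring
    _ ≤ 3 * ((Real.exp 1 * t₀ / t₁) ^ (C * (400 * α))) *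
          (t₀ ^ (3 / 2 : ℝ) * t₁ ^ (-(3 : ℝ) / 2)) := by
        gcongr
        norm_num
    _ = _ := by ring


/-! ### The estimate for globally smooth functions -/

/-- sum of squares of components -/
def NN (f : Fin 3 → ℝ × E3 → ℝ) (z : ℝ × E3) : ℝ := ∑ k, f k z ^ 2

/-- sum of squares of gradients -/
def GR (f : Fin 3 → ℝ × E3 → ℝ) (z : ℝ × E3) : ℝ := ∑ k, GG (f k) z

/-- energy density -/
def ener (T : ℝ) (f : Fin 3 → ℝ × E3 → ℝ) (z : ℝ × E3) : ℝ := T⁻¹ * NN f z + GR f z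

lemma NN_nonneg (f : Fin 3 → ℝ × E3 → ℝ) (z : ℝ × E3) : 0 ≤ NN f z :=
  Finset.sum_nonneg fun _ _ => sq_nonneg _

lemma GR_nonneg (f : Fin 3 → ℝ × E3 → ℝ) (z : ℝ × E3) : 0 ≤ GR f z :=
  Finset.sum_nonneg fun _ _ => GG_nonneg _ _

lemma ener_nonneg {T : ℝ} (hT : 0 < T) (f : Fin 3 → ℝ × E3 → ℝ) (z : ℝ × E3) :
    0 ≤ ener T f z := by
  have := NN_nonneg f z
  have := GR_nonneg f z
  unfold ener; positivity

section
variable {f : Fin 3 → ℝ × E3 → ℝ}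

lemma cont_NN (hf : ∀ k, ContDiff ℝ (⊤ : ℕ∞) (f k)) : Continuous (NN f) := by
  have := fun k => (hf k).continuous
  unfold NN; fun_prop

lemma cont_GR (hf : ∀ k, ContDiff ℝ (⊤ : ℕ∞) (f k)) : Continuous (GR f) := by
  have := fun k i => (contDiff_dX (hf k) i).continuous
  unfold GR GG; fun_prop

lemma cont_ener (hf : ∀ k, ContDiff ℝ (⊤ : ℕ∞) (f k)) (T : ℝ) : Continuous (ener T f) := by
  have := cont_NN hf
  have := cont_GR hf
  unfold ener; fun_prop

variable {α T t₁ ρ M : ℝ}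

/-- crude lower bound for the main integrand -/
lemma mainI_ge {v : ℝ × E3 → ℝ} {z : ℝ × E3} (hT : 0 < T) (hα : 0 ≤ α)
    (hs : 0 < z.1 + t₁) (hsT : z.1 + t₁ ≤ 1.001 * T) :
    ((z.1 + t₁) / (2 * T) * GG v z + α / (4 * T) * v z ^ 2 - (z.1 + t₁) * LL v z ^ 2) *
      cG α (2 * T) t₁ z ≤ mainI α (2 * T) t₁ v z := by
  unfold mainI
  have hG := (cG_pos (α := α) (S := 2 * T) hs).le
  set s := z.1 + t₁
  refine mul_le_mul_of_nonneg_right ?_ hG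
  have h1 : α / (4 * T) * v z ^ 2 ≤ α * (1 + 4 * s / (2 * T)) / (2 * (2 * T)) * v z ^ 2 := by
    have : 0 ≤ 4 * s / (2 * T) := by positivity
    have e : 2 * (2 * T) = 4 * T := by ring
    rw [e]
    gcongr
    nlinarith
  have h2 : cw (2 * T) s / 2 ≤ s := by
    unfold cw
    have : s / (2 * T) ≤ 1 := by rw [div_le_iff₀ (by positivity)]; linarith
    nlinarith
  have h3 := mul_le_mul_of_nonneg_right h2 (sq_nonneg (LL v z))
  unfold GG
  unfold LL at h3 ⊢
  linarith

lemma near_bound {z : ℝ × E3} (hρ : 0 < ρ) (hT : 0 < T) (hα : 10000 ≤ α)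
    (hs : 0 < z.1 + t₁) (hsT : z.1 + t₁ ≤ 1.001 * T) (hz : ‖z.2‖ ≤ ρ / 2)
    (hL : ∑ k, LL (f k) z ^ 2 ≤ NN f z / (32 * T ^ 2) + GR f z / (4 * T)) :
    ((z.1 + t₁) / (4 * T) * GR f z + T⁻¹ * NN f z) * cG α (2 * T) t₁ z ≤
      ∑ k, mainI α (2 * T) t₁ (fun z => psi ρ z * f k z) z := by
  have hG := (cG_pos (α := α) (S := 2 * T) hs).le
  have key : ∀ k, ((z.1 + t₁) / (2 * T) * GG (f k) z + α / (4 * T) * f k z ^ 2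
      - (z.1 + t₁) * LL (f k) z ^ 2) * cG α (2 * T) t₁ z ≤
        mainI α (2 * T) t₁ (fun z => psi ρ z * f k z) z := by
    intro k
    obtain ⟨h1, h2, h3⟩ := near_ops hρ (f k) z hz
    have hα0 : 0 ≤ α := by linarith
    have := mainI_ge (v := fun z => psi ρ z * f k z) hT hα0 hs hsT
    rw [h2, h3] at this
    simp only [h1] at this
    exact this
  refine le_trans ?_ (Finset.sum_le_sum fun k _ => key k)
  rw [← Finset.sum_mul]
  refine mul_le_mul_of_nonneg_right ?_ hG
  rw [Finset.sum_sub_distrib, Finset.sum_add_distrib, ← Finset.mul_sum, ← Finset.mul_sum,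
    ← Finset.mul_sum]
  change _ ≤ (z.1 + t₁) / (2 * T) * GR f z + α / (4 * T) * NN f z - _
  have hN := NN_nonneg f z
  set s := z.1 + t₁
  have h1 := mul_le_mul_of_nonneg_left hL hs.le
  have h2 : s * (NN f z / (32 * T ^ 2)) ≤ T⁻¹ * NN f z := by
    have : s * (NN f z / (32 * T ^ 2)) = (s / T / 32) * (T⁻¹ * NN f z) := by field_simp
    rw [this]
    have : s / T ≤ 1.001 := by rw [div_le_iff₀ hT]; linarith
    have : 0 ≤ T⁻¹ * NN f z := by positivity
    nlinarith
  have h3 : 2 * (T⁻¹ * NN f z) ≤ α / (4 * T) * NN f z := by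
    have : α / (4 * T) * NN f z = α / 4 * (T⁻¹ * NN f z) := by field_simp
    rw [this]
    have : 0 ≤ T⁻¹ * NN f z := by positivity
    nlinarith
  have h4 : s / (2 * T) * GR f z = s / (4 * T) * GR f z + s * (GR f z / (4 * T)) := by
    field_simp; ring
  linarith

lemma far_bound {z : ℝ × E3} (hf : ∀ k, ContDiff ℝ (⊤ : ℕ∞) (f k)) (hM : 1 ≤ M)
    (hb : ∀ i z, |dX i (psi ρ) z| ≤ M / ρ ∧ |dX i (dX i (psi ρ)) z| ≤ M / ρ ^ 2)
    (hρ : 0 < ρ) (hT : 0 < T) (hα : 10000 ≤ α) (hTρ : 4000 * T ≤ ρ ^ 2)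
    (hs : 0 < z.1 + t₁) (hsT : z.1 + t₁ ≤ 1.001 * T)
    (hL : ∑ k, LL (f k) z ^ 2 ≤ NN f z / (32 * T ^ 2) + GR f z / (4 * T)) :
    -(M ^ 2 / T * ((z.1 + t₁) * cG α (2 * T) t₁ z) * ener T f z) ≤
      ∑ k, mainI α (2 * T) t₁ (fun z => psi ρ z * f k z) z := by
  have hG := (cG_pos (α := α) (S := 2 * T) hs).le
  have hb1 : (M / ρ) ^ 2 ≤ M ^ 2 / (4000 * T) := by
    rw [div_pow]; gcongr
  have hb2 : (M / ρ ^ 2) ^ 2 ≤ M ^ 2 / (4000 * T) ^ 2 := by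
    rw [div_pow]; gcongr
  have key : ∀ k, -(((z.1 + t₁) * cG α (2 * T) t₁ z) * (3 * LL (f k) z ^ 2 +
      36 * (M ^ 2 / (4000 * T)) * GG (f k) z + 27 * (M ^ 2 / (4000 * T) ^ 2) * f k z ^ 2)) ≤
        mainI α (2 * T) t₁ (fun z => psi ρ z * f k z) z := by
    intro k
    obtain ⟨-, -, h3⟩ := far_ops hb (hf k) z
    refine le_trans ?_ (mainI_ge (v := fun z => psi ρ z * f k z) hT (by linarith) hs hsT)
    have g1 := GG_nonneg (fun z => psi ρ z * f k z) z
    have g2 := GG_nonneg (f k) z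
    have h4 : LL (fun z => psi ρ z * f k z) z ^ 2 ≤ 3 * LL (f k) z ^ 2 +
      36 * (M ^ 2 / (4000 * T)) * GG (f k) z + 27 * (M ^ 2 / (4000 * T) ^ 2) * f k z ^ 2 := by
      refine h3.trans ?_
      gcongr
    have h5 : 0 ≤ (z.1 + t₁) / (2 * T) * GG (fun z => psi ρ z * f k z) z +
        α / (4 * T) * (psi ρ z * f k z) ^ 2 := by
      have : 0 ≤ α := by linarith
      positivity
    have h6 := mul_le_mul_of_nonneg_left h4 hs.le
    have h7 : -((z.1 + t₁) * (3 * LL (f k) z ^ 2 +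
      36 * (M ^ 2 / (4000 * T)) * GG (f k) z + 27 * (M ^ 2 / (4000 * T) ^ 2) * f k z ^ 2)) ≤
      (z.1 + t₁) / (2 * T) * GG (fun z => psi ρ z * f k z) z +
        α / (4 * T) * (psi ρ z * f k z) ^ 2 - (z.1 + t₁) * LL (fun z => psi ρ z * f k z) z ^ 2 := by
      linarith
    have h8 := mul_le_mul_of_nonneg_right h7 hG
    refine le_trans (le_of_eq ?_) h8
    ring
  refine le_trans ?_ (Finset.sum_le_sum fun k _ => key k)
  rw [Finset.sum_neg_distrib, ← Finset.mul_sum, Finset.sum_add_distrib, Finset.sum_add_distrib,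
    ← Finset.mul_sum, ← Finset.mul_sum, ← Finset.mul_sum]
  change _ ≤ -(_ * (_ + _ * GR f z + _ * NN f z))
  have hN := NN_nonneg f z
  have hR := GR_nonneg f z
  have h0 : 0 ≤ (z.1 + t₁) * cG α (2 * T) t₁ z := by positivity
  have : 3 * ∑ k, LL (f k) z ^ 2 + 36 * (M ^ 2 / (4000 * T)) * GR f z +
      27 * (M ^ 2 / (4000 * T) ^ 2) * NN f z ≤ M ^ 2 / T * ener T f z := by
    have hM2 : 1 ≤ M ^ 2 := by nlinarith
    have e1 : NN f z / (32 * T ^ 2) = 1 / 32 * (NN f z / T ^ 2) := by field_simp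
    have e2 : GR f z / (4 * T) = 1 / 4 * (GR f z / T) := by field_simp
    have e3 : 36 * (M ^ 2 / (4000 * T)) * GR f z = 36 / 4000 * (M ^ 2 * (GR f z / T)) := by
      field_simp
    have e4 : 27 * (M ^ 2 / (4000 * T) ^ 2) * NN f z =
      27 / 16000000 * (M ^ 2 * (NN f z / T ^ 2)) := by
      field_simp; ring
    have e5 : M ^ 2 / T * ener T f z = M ^ 2 * (NN f z / T ^ 2) + M ^ 2 * (GR f z / T) := by
      unfold ener; field_simp
    have p1 : 0 ≤ NN f z / T ^ 2 := by positivity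
    have p2 : 0 ≤ GR f z / T := by positivity
    have q1 := mul_le_mul_of_nonneg_right hM2 p1
    have q2 := mul_le_mul_of_nonneg_right hM2 p2
    rw [e3, e4, e5]
    rw [e1, e2] at hL
    linarith
  have := mul_le_mul_of_nonneg_left this h0
  linarith

/-- upper bound for the final-time density -/
lemma dens_final {z : ℝ × E3} (hf : ∀ k, ContDiff ℝ (⊤ : ℕ∞) (f k)) (hM : 1 ≤ M)
    (hb : ∀ i z, |dX i (psi ρ) z| ≤ M / ρ ∧ |dX i (dX i (psi ρ)) z| ≤ M / ρ ^ 2)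
    (hρ : 0 < ρ) (hT : 0 < T) (hα : 10000 ≤ α) (hTρ : 4000 * T ≤ ρ ^ 2)
    (hs : 0 < z.1 + t₁) (hsT : z.1 + t₁ ≤ 1.001 * T) :
    ∑ k, dens α (2 * T) t₁ (fun z => psi ρ z * f k z) z ≤
      6 * T * M ^ 2 * (α * cA α (2 * T) (z.1 + t₁)) * ener T f z := by
  have hb1 : (M / ρ) ^ 2 ≤ M ^ 2 / (4000 * T) := by
    rw [div_pow]; gcongr
  have hM2 : 1 ≤ M ^ 2 := by nlinarith
  have hA : 0 ≤ cA α (2 * T) (z.1 + t₁) := by unfold cA; positivity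
  have hα0 : 0 ≤ α := by linarith
  have hGA : cG α (2 * T) t₁ z ≤ cA α (2 * T) (z.1 + t₁) := by
    unfold cG
    refine mul_le_of_le_one_right hA ?_
    rw [Real.exp_le_one_iff, neg_div]
    have : 0 ≤ (z.2 0 ^ 2 + z.2 1 ^ 2 + z.2 2 ^ 2) / (4 * (z.1 + t₁)) := by positivity
    linarith
  have hG := (cG_pos (α := α) (S := 2 * T) hs).le
  have key : ∀ k, dens α (2 * T) t₁ (fun z => psi ρ z * f k z) z ≤
      6 * T * M ^ 2 * (α * cA α (2 * T) (z.1 + t₁)) * (T⁻¹ * f k z ^ 2 + GG (f k) z) := by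
    intro k
    obtain ⟨h1, h2, -⟩ := far_ops hb (hf k) z
    have g1 := GG_nonneg (fun z => psi ρ z * f k z) z
    have g2 := GG_nonneg (f k) z
    change cw (2 * T) (z.1 + t₁) * (GG (fun z => psi ρ z * f k z) z +
      cF α (2 * T) (z.1 + t₁) / 2 * (psi ρ z * f k z) ^ 2) * cG α (2 * T) t₁ z ≤ _
    have c1 : cw (2 * T) (z.1 + t₁) ≤ 3 * T := by
      unfold cw
      have : (z.1 + t₁) / (2 * T) ≤ 1 := by rw [div_le_iff₀ (by positivity)]; linarith
      nlinarith
    have c0 : 0 ≤ cw (2 * T) (z.1 + t₁) := by unfold cw; positivity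
    have c2 : cF α (2 * T) (z.1 + t₁) ≤ α * T⁻¹ := by
      unfold cF
      have : 0 ≤ α / (z.1 + t₁) := by positivity
      have e : 2 * α / (2 * T) = α * T⁻¹ := by field_simp
      rw [e, neg_div]; linarith
    have p1 : 0 ≤ T⁻¹ * f k z ^ 2 := by positivity
    have c3 : GG (fun z => psi ρ z * f k z) z +
      cF α (2 * T) (z.1 + t₁) / 2 * (psi ρ z * f k z) ^ 2 ≤
        2 * M ^ 2 * α * (T⁻¹ * f k z ^ 2 + GG (f k) z) := by
      have d1 : cF α (2 * T) (z.1 + t₁) / 2 * (psi ρ z * f k z) ^ 2 ≤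
          α * T⁻¹ / 2 * f k z ^ 2 := by
        calc _ ≤ α * T⁻¹ / 2 * (psi ρ z * f k z) ^ 2 := by gcongr
          _ ≤ _ := by gcongr
      have d2 : 6 * (M / ρ) ^ 2 * f k z ^ 2 ≤ 6 / 4000 * M ^ 2 * (T⁻¹ * f k z ^ 2) := by
        calc _ ≤ 6 * (M ^ 2 / (4000 * T)) * f k z ^ 2 := by gcongr
          _ = _ := by field_simp
      have d3 : 10000 ≤ M ^ 2 * α := by nlinarith
      have d4 : α ≤ M ^ 2 * α := by nlinarith
      have d5 : M ^ 2 ≤ M ^ 2 * α := by nlinarith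
      have r1 := mul_le_mul_of_nonneg_right d4 p1
      have r2 := mul_le_mul_of_nonneg_right d5 p1
      have r3 := mul_le_mul_of_nonneg_right d3 g2
      have r4 : 0 ≤ M ^ 2 * (T⁻¹ * f k z ^ 2) := by positivity
      nlinarith
    calc _ ≤ cw (2 * T) (z.1 + t₁) * (2 * M ^ 2 * α * (T⁻¹ * f k z ^ 2 + GG (f k) z)) *
          cG α (2 * T) t₁ z := by gcongr
      _ ≤ 3 * T * (2 * M ^ 2 * α * (T⁻¹ * f k z ^ 2 + GG (f k) z)) *
          cA α (2 * T) (z.1 + t₁) := by gcongr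
      _ = _ := by ring
  refine (Finset.sum_le_sum fun k _ => key k).trans (le_of_eq ?_)
  rw [← Finset.mul_sum, Finset.sum_add_distrib, ← Finset.mul_sum]
  rfl

lemma norm_sq_E3 (x : E3) : x 0 ^ 2 + x 1 ^ 2 + x 2 ^ 2 = ‖x‖ ^ 2 := by
  rw [EuclideanSpace.real_norm_sq_eq, Fin.sum_univ_three]

/-- lower bound for the initial-time density -/
lemma dens_init {x : E3} (hT : 0 < T) (hα : 10000 ≤ α) (ht₁ : 0 < t₁) :
    -∑ k, dens α (2 * T) t₁ (fun z => psi ρ z * f k z) (0, x) ≤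
      α / 2 * cA α (2 * T) t₁ * (NN f (0, x) * Real.exp (-‖x‖ ^ 2 / (4 * t₁))) := by
  have hα0 : 0 ≤ α := by linarith
  have hA : 0 ≤ cA α (2 * T) t₁ := by unfold cA; positivity
  have key : ∀ k, -dens α (2 * T) t₁ (fun z => psi ρ z * f k z) (0, x) ≤
      α / 2 * cA α (2 * T) t₁ * (f k (0, x) ^ 2 * Real.exp (-‖x‖ ^ 2 / (4 * t₁))) := by
    intro k
    have g1 := GG_nonneg (fun z => psi ρ z * f k z) (0, x)
    have e1 : cG α (2 * T) t₁ (0, x) = cA α (2 * T) t₁ * Real.exp (-‖x‖ ^ 2 / (4 * t₁)) := by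
      unfold cG
      simp only [zero_add, norm_sq_E3]
    change -(cw (2 * T) (0 + t₁) * (GG (fun z => psi ρ z * f k z) (0, x) +
      cF α (2 * T) (0 + t₁) / 2 * (psi ρ (0, x) * f k (0, x)) ^ 2) * cG α (2 * T) t₁ (0, x)) ≤ _
    rw [e1, zero_add]
    have c0 : 0 ≤ cw (2 * T) t₁ := by unfold cw; positivity
    have c1 : -(cw (2 * T) t₁ * cF α (2 * T) t₁) ≤ α := by
      unfold cw cF
      have : -(t₁ * (1 + t₁ / (2 * T)) * (-α / t₁ + 2 * α / (2 * T))) =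
          α - α * (t₁ / (2 * T)) - 2 * α * (t₁ / (2 * T)) ^ 2 := by
        field_simp; ring
      rw [this]
      have : 0 ≤ α * (t₁ / (2 * T)) := by positivity
      have : 0 ≤ 2 * α * (t₁ / (2 * T)) ^ 2 := by positivity
      linarith
    have h1 : (psi ρ (0, x) * f k (0, x)) ^ 2 ≤ f k (0, x) ^ 2 := by
      rw [mul_pow]
      have := psi_abs ρ ((0 : ℝ), x)
      nlinarith [sq_nonneg (f k (0, x))]
    have h2 : -(cw (2 * T) t₁ * (GG (fun z => psi ρ z * f k z) (0, x) +
      cF α (2 * T) t₁ / 2 * (psi ρ (0, x) * f k (0, x)) ^ 2)) ≤ α / 2 * f k (0, x) ^ 2 := by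
      have q1 : 0 ≤ cw (2 * T) t₁ * GG (fun z => psi ρ z * f k z) (0, x) := by positivity
      have q2 := mul_le_mul_of_nonneg_right c1 (sq_nonneg (psi ρ (0, x) * f k (0, x)))
      have q3 := mul_le_mul_of_nonneg_left h1 hα0
      linarith
    have h3 : 0 ≤ cA α (2 * T) t₁ * Real.exp (-‖x‖ ^ 2 / (4 * t₁)) := by positivity
    have h4 := mul_le_mul_of_nonneg_right h2 h3
    linarith
  rw [← Finset.sum_neg_distrib]
  refine (Finset.sum_le_sum fun k _ => key k).trans (le_of_eq ?_)
  rw [← Finset.mul_sum, ← Finset.sum_mul]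
  rfl

end


section
variable {f : Fin 3 → ℝ × E3 → ℝ}

lemma intOn_prod' {g : ℝ × E3 → ℝ} (hg : Continuous g) (a b ρ : ℝ) :
    IntegrableOn g (Icc a b ×ˢ BB ρ) :=
  hg.continuousOn.integrableOn_compact (isCompact_Icc.prod (isCompact_BB ρ))

lemma intOn_slice' {g : ℝ × E3 → ℝ} (hg : Continuous g) (t ρ : ℝ) :
    IntegrableOn (fun x => g (t, x)) (BB ρ) :=
  (hg.comp (Continuous.prodMk_right t)).continuousOn.integrableOn_compact (isCompact_BB ρ)

lemma setInt_prod {g : ℝ × E3 → ℝ} {a b ρ : ℝ} (hg : IntegrableOn g (Icc a b ×ˢ BB ρ)) :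
    ∫ z in Icc a b ×ˢ BB ρ, g z = ∫ t in Icc a b, ∫ x in BB ρ, g (t, x) := by
  rw [Measure.volume_eq_prod] at hg ⊢
  exact setIntegral_prod _ hg

lemma pigeon {g : ℝ × E3 → ℝ} (hg : Continuous g) (h0 : ∀ z, 0 ≤ g z) {T : ℝ} (hT : 0 < T)
    (ρ : ℝ) : ∃ T₀, T / 2 ≤ T₀ ∧ T₀ ≤ T ∧
      ∫ x in BB ρ, g (T₀, x) ≤ 2 / T * ∫ z in Icc 0 T ×ˢ BB ρ, g z := by
  have j := intOn_prod' hg 0 T ρ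
  rw [setInt_prod j]
  have i1 : IntegrableOn (fun t => ∫ x in BB ρ, g (t, x)) (Icc 0 T) := by
    rw [Measure.volume_eq_prod, IntegrableOn, ← Measure.prod_restrict] at j
    exact j.integral_prod_left
  have hsub : Icc (T / 2) T ⊆ Icc 0 T := Icc_subset_Icc (by linarith) le_rfl
  obtain ⟨T₀, h1, h2⟩ := exists_le_setAverage (μ := volume) (s := Icc (T / 2) T)
    (f := fun t => ∫ x in BB ρ, g (t, x)) (by simp [hT]) (by simp)
    (i1.mono_set hsub)
  refine ⟨T₀, h1.1, h1.2, h2.trans ?_⟩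
  rw [setAverage_eq]
  have e : volume.real (Icc (T / 2) T) = T / 2 := by
    rw [Real.volume_real_Icc_of_le (by linarith)]; ring
  rw [e, smul_eq_mul, inv_div]
  gcongr
  · exact Filter.Eventually.of_forall fun t => integral_nonneg fun x => h0 _

lemma box_int {T ρ t₀ : ℝ} (hf : ∀ k, ContDiff ℝ (⊤ : ℕ∞) (f k)) (ht₀ : 0 < t₀) :
    IntegrableOn (fun z : ℝ × E3 => ener T f z * Real.exp (-‖z.2‖ ^ 2 / (4 * z.1)))
      (Icc t₀ (2 * t₀) ×ˢ BB ρ) := by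
  refine ContinuousOn.integrableOn_compact (isCompact_Icc.prod (isCompact_BB _)) ?_
  have := cont_ener hf T
  have h2 : ContinuousOn (fun z : ℝ × E3 => -‖z.2‖ ^ 2 / (4 * z.1))
      (Icc t₀ (2 * t₀) ×ˢ BB ρ) := by
    refine ContinuousOn.div (by fun_prop) (by fun_prop) ?_
    rintro z ⟨⟨h1, -⟩, -⟩
    have : 0 < z.1 := by linarith
    positivity
  fun_prop

set_option maxHeartbeats 2000000 in
theorem global_est {T ρ t₀ t₁ M : ℝ} (hf : ∀ k, ContDiff ℝ (⊤ : ℕ∞) (f k)) (hM : 1 ≤ M)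
    (hb : ∀ i z, |dX i (psi ρ) z| ≤ M / ρ ∧ |dX i (dX i (psi ρ)) z| ≤ M / ρ ^ 2)
    (hρ : 0 < ρ) (hT : 0 < T) (hTρ : 4000 * T ≤ ρ ^ 2)
    (ht₁ : 0 < t₁) (ht : t₁ ≤ t₀) (ht₀T : t₀ ≤ T / 1000)
    (hL : ∀ z : ℝ × E3, z.1 ∈ Icc 0 T → ‖z.2‖ ≤ ρ →
      ∑ k, LL (f k) z ^ 2 ≤ NN f z / (32 * T ^ 2) + GR f z / (4 * T)) :
    ∫ z in Icc t₀ (2 * t₀) ×ˢ BB (ρ / 2), ener T f z * Real.exp (-‖z.2‖ ^ 2 / (4 * z.1)) ≤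
      300 * M ^ 2 * (Real.exp (-ρ ^ 2 / (500 * t₀)) * (∫ z in Icc 0 T ×ˢ BB ρ, ener T f z) +
        t₀ ^ ((3 : ℝ) / 2) * (Real.exp 1 * t₀ / t₁) ^ (300 * M ^ 2 * ρ ^ 2 / t₀) *
        ∫ x in BB ρ, NN f (0, x) * t₁ ^ (-(3 : ℝ) / 2) * Real.exp (-‖x‖ ^ 2 / (4 * t₁))) := by
  have ht₀ : 0 < t₀ := by linarith
  obtain ⟨α, hαdef⟩ : ∃ α, α = ρ ^ 2 / (400 * t₀) := ⟨_, rfl⟩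
  have hρα : ρ ^ 2 = 400 * α * t₀ := by rw [hαdef]; field_simp
  have hTα : T / t₀ ≤ α / 10 := by
    rw [div_le_iff₀ ht₀]; nlinarith
  have hα : 10000 ≤ α := by
    have : 1000 ≤ T / t₀ := by rw [le_div_iff₀ ht₀]; linarith
    linarith
  have hM2 : 1 ≤ M ^ 2 := by nlinarith
  have hα0 : 0 ≤ α := by linarith
  obtain ⟨T₀, hT1, hT2, hT3⟩ := pigeon (cont_ener hf T) (ener_nonneg hT f) hT ρ
  set X := ∫ z in Icc 0 T ×ˢ BB ρ, ener T f z with hX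
  have hX0 : 0 ≤ X := integral_nonneg fun z => ener_nonneg hT f z
  set v : Fin 3 → ℝ × E3 → ℝ := fun k z => psi ρ z * f k z with hv
  have hvs : ∀ k, ContDiff ℝ (⊤ : ℕ∞) (v k) := fun k => (contDiff_psi ρ).mul (hf k)
  have hv0 : ∀ k, ∀ z : ℝ × E3, ρ < ‖z.2‖ → v k z = 0 := fun k z hz => by
    simp [hv, psi_zero hρ z hz]
  set A := (3 * t₀) ^ (-(3 / 2 + α)) with hA
  have hA0 : 0 < A := by positivity
  set Λ := 3 * t₀ * A * Real.exp (-(0.8 * α)) with hΛ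
  have hΛ0 : 0 < Λ := by positivity
  set H : ℝ × E3 → ℝ := fun z => (∑ k, mainI α (2 * T) t₁ (v k) z) + M ^ 2 / T * Λ * ener T f z
    with hH
  have hHc : ContinuousOn H (OO t₁) := by
    have := cont_ener hf T
    have h1 : ∀ k, ContinuousOn (mainI α (2 * T) t₁ (v k)) (OO t₁) := fun k => contOn_mainI (hvs k)
    refine ContinuousOn.add (continuousOn_finsetSum _ fun k _ => h1 k) ?_
    fun_prop
  have hsz : ∀ z : ℝ × E3, z ∈ Icc 0 T₀ ×ˢ BB ρ →
      0 < z.1 + t₁ ∧ z.1 + t₁ ≤ 1.001 * T ∧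
      (∑ k, LL (f k) z ^ 2 ≤ NN f z / (32 * T ^ 2) + GR f z / (4 * T)) := by
    rintro z ⟨⟨h1, h2⟩, h3⟩
    exact ⟨by linarith, by linarith, hL z ⟨h1, h2.trans hT2⟩ h3⟩
  -- the near region
  have hnear : ∀ z : ℝ × E3, z ∈ Icc 0 T₀ ×ˢ BB ρ → ‖z.2‖ ≤ ρ / 2 →
      ((z.1 + t₁) / (4 * T) * GR f z + T⁻¹ * NN f z) * cG α (2 * T) t₁ z ≤ H z := by
    intro z hz hn
    obtain ⟨h1, h2, h3⟩ := hsz z hz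
    have := near_bound hρ hT hα h1 h2 hn h3
    have h4 := ener_nonneg hT f z
    have : 0 ≤ M ^ 2 / T * Λ * ener T f z := by positivity
    simp only [hH, hv]
    linarith
  have hpos : ∀ z : ℝ × E3, z ∈ Icc 0 T₀ ×ˢ BB ρ → 0 ≤ H z := by
    intro z hz
    obtain ⟨h1, h2, h3⟩ := hsz z hz
    have hG := (cG_pos (α := α) (S := 2 * T) h1).le
    have hN := NN_nonneg f z
    have hR := GR_nonneg f z
    rcases le_total ‖z.2‖ (ρ / 2) with hn | hn
    · refine le_trans ?_ (hnear z hz hn)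
      positivity
    · have h4 := far_bound hf hM hb hρ hT hα hTρ h1 h2 h3
      have h5 : (z.1 + t₁) * cG α (2 * T) t₁ z ≤ Λ := by
        refine le_trans ?_ (num1 hα ht₀ hT h1 h2)
        unfold cG cA
        rw [norm_sq_E3]
        gcongr
        rw [neg_div, neg_le_neg_iff, div_le_div_iff₀ h1 (by positivity)]
        have : ρ ^ 2 / 4 ≤ ‖z.2‖ ^ 2 := by nlinarith
        nlinarith
      have h6 := ener_nonneg hT f z
      have h7 : M ^ 2 / T * ((z.1 + t₁) * cG α (2 * T) t₁ z) * ener T f z ≤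
        M ^ 2 / T * Λ * ener T f z := by gcongr
      simp only [hH, hv]
      linarith
  -- the box
  have hbox : ∀ z : ℝ × E3, z ∈ Icc t₀ (2 * t₀) ×ˢ BB (ρ / 2) →
      t₀ / (4 * T) * A * (ener T f z * Real.exp (-‖z.2‖ ^ 2 / (4 * z.1))) ≤ H z := by
    rintro z ⟨⟨h1, h2⟩, h3⟩
    have h3' : ‖z.2‖ ≤ ρ / 2 := h3
    have hz : z ∈ Icc 0 T₀ ×ˢ BB ρ :=
      ⟨⟨by linarith, by linarith⟩, (show ‖z.2‖ ≤ ρ by linarith)⟩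
    refine le_trans ?_ (hnear z hz h3)
    have hs : 0 < z.1 + t₁ := by linarith
    have hz1 : 0 < z.1 := by linarith
    have hN := NN_nonneg f z
    have hR := GR_nonneg f z
    have c1 : A ≤ cA α (2 * T) (z.1 + t₁) := by
      unfold cA
      have d1 : A ≤ (z.1 + t₁) ^ (-(3 / 2 + α)) := by
        rw [hA]
        exact Real.rpow_le_rpow_of_nonpos hs (by linarith) (by linarith)
      have d2 : 1 ≤ Real.exp (2 * α * (z.1 + t₁) / (2 * T)) := by
        apply Real.one_le_exp; positivity
      nlinarith
    have c2 : A * Real.exp (-‖z.2‖ ^ 2 / (4 * z.1)) ≤ cG α (2 * T) t₁ z := by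
      unfold cG
      rw [norm_sq_E3]
      have c0 := hA0.le.trans c1
      have c5 : -‖z.2‖ ^ 2 / (4 * z.1) ≤ -‖z.2‖ ^ 2 / (4 * (z.1 + t₁)) := by
        rw [neg_div, neg_div, neg_le_neg_iff]
        gcongr
        linarith
      exact mul_le_mul c1 (Real.exp_le_exp.2 c5) (Real.exp_pos _).le c0
    have c3 : t₀ / (4 * T) * ener T f z ≤ (z.1 + t₁) / (4 * T) * GR f z + T⁻¹ * NN f z := by
      unfold ener
      have e1 : t₀ / (4 * T) ≤ 1 := by rw [div_le_iff₀ (by positivity)]; linarith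
      have e2 : t₀ / (4 * T) * GR f z ≤ (z.1 + t₁) / (4 * T) * GR f z := by
        gcongr; linarith
      have e3 : t₀ / (4 * T) * (T⁻¹ * NN f z) ≤ 1 * (T⁻¹ * NN f z) := by gcongr
      linarith
    have h6 := ener_nonneg hT f z
    calc _ = (t₀ / (4 * T) * ener T f z) * (A * Real.exp (-‖z.2‖ ^ 2 / (4 * z.1))) := by ring
      _ ≤ _ := by gcongr
  set LHS := ∫ z in Icc t₀ (2 * t₀) ×ˢ BB (ρ / 2), ener T f z * Real.exp (-‖z.2‖ ^ 2 / (4 * z.1))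
    with hLHS
  have hms : MeasurableSet (Icc (0 : ℝ) T₀ ×ˢ BB ρ) := measurableSet_Icc.prod (measurableSet_BB ρ)
  have hiH : IntegrableOn H (Icc 0 T₀ ×ˢ BB ρ) := intOn_prod hHc ht₁ _ _ _ le_rfl
  have hsubbox : Icc t₀ (2 * t₀) ×ˢ BB (ρ / 2) ⊆ Icc 0 T₀ ×ˢ BB ρ := by
    refine prod_mono (Icc_subset_Icc ht₀.le (by linarith)) ?_
    intro x (hx : ‖x‖ ≤ ρ / 2)
    show ‖x‖ ≤ ρ
    linarith
  have step1 : t₀ / (4 * T) * A * LHS ≤ ∫ z in Icc 0 T₀ ×ˢ BB ρ, H z := by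
    rw [hLHS, ← integral_const_mul]
    refine le_trans (setIntegral_mono_on ?_ (hiH.mono_set hsubbox)
      (measurableSet_Icc.prod (measurableSet_BB _)) hbox) ?_
    · exact (box_int hf ht₀).const_mul _
    · refine setIntegral_mono_set hiH ?_ hsubbox.eventuallyLE
      exact (ae_restrict_iff' hms).2 (Filter.Eventually.of_forall hpos)
  have iM : ∀ k, IntegrableOn (mainI α (2 * T) t₁ (v k)) (Icc 0 T₀ ×ˢ BB ρ) := fun k =>
    intOn_prod (contOn_mainI (hvs k)) ht₁ _ _ _ le_rfl
  have step2 : ∫ z in Icc 0 T₀ ×ˢ BB ρ, H z ≤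
      (∑ k, ∫ z in Icc 0 T₀ ×ˢ BB ρ, mainI α (2 * T) t₁ (v k) z) + M ^ 2 / T * Λ * X := by
    simp only [hH]
    rw [integral_add (integrable_finsetSum _ fun k _ => iM k)
      ((intOn_prod' (cont_ener hf T) _ _ _).const_mul _),
      integral_finsetSum _ fun k _ => iM k, integral_const_mul]
    gcongr
    refine setIntegral_mono_set (intOn_prod' (cont_ener hf T) _ _ _)
      (Filter.Eventually.of_forall fun z => ener_nonneg hT f z) ?_
    exact (prod_mono (Icc_subset_Icc le_rfl hT2) subset_rfl).eventuallyLE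
  have iD : ∀ k t, 0 < t + t₁ → IntegrableOn (fun x => dens α (2 * T) t₁ (v k) (t, x)) (BB ρ) :=
    fun k t h => intOn_slice (contOn_dens (hvs k)) ρ h
  have step3 : ∑ k, ∫ z in Icc 0 T₀ ×ˢ BB ρ, mainI α (2 * T) t₁ (v k) z ≤
      (∫ x in BB ρ, ∑ k, dens α (2 * T) t₁ (v k) (T₀, x)) +
        ∫ x in BB ρ, -∑ k, dens α (2 * T) t₁ (v k) (0, x) := by
    rw [integral_neg, integral_finsetSum _ fun k _ => iD k T₀ (by linarith),
      integral_finsetSum _ fun k _ => iD k 0 (by linarith), ← sub_eq_add_neg,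
      ← Finset.sum_sub_distrib]
    exact Finset.sum_le_sum fun k _ =>
      carleman_int (hvs k) (by linarith) ht₁ (by linarith) (hv0 k)
  have step4 : (∫ x in BB ρ, ∑ k, dens α (2 * T) t₁ (v k) (T₀, x)) ≤
      12 * M ^ 2 * (α * cA α (2 * T) (T₀ + t₁)) * X := by
    have hA1 : 0 ≤ cA α (2 * T) (T₀ + t₁) := by
      have : 0 < T₀ + t₁ := by linarith
      unfold cA; positivity
    calc _ ≤ ∫ x in BB ρ, 6 * T * M ^ 2 * (α * cA α (2 * T) (T₀ + t₁)) * ener T f (T₀, x) := by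
          refine setIntegral_mono_on (integrable_finsetSum _ fun k _ => iD k T₀ (by linarith))
            ((intOn_slice' (cont_ener hf T) _ _).const_mul _) (measurableSet_BB _) fun x _ => ?_
          exact dens_final (z := (T₀, x)) hf hM hb hρ hT hα hTρ (by simp only; linarith)
            (by simp only; linarith)
      _ = 6 * T * M ^ 2 * (α * cA α (2 * T) (T₀ + t₁)) * ∫ x in BB ρ, ener T f (T₀, x) := by
          rw [integral_const_mul]
      _ ≤ 6 * T * M ^ 2 * (α * cA α (2 * T) (T₀ + t₁)) * (2 / T * X) := by gcongr
      _ = _ := by field_simp; ring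
  set Y := ∫ x in BB ρ, NN f (0, x) * Real.exp (-‖x‖ ^ 2 / (4 * t₁)) with hY
  have hY0 : 0 ≤ Y := integral_nonneg fun x => mul_nonneg (NN_nonneg f _) (Real.exp_pos _).le
  have step5 : (∫ x in BB ρ, -∑ k, dens α (2 * T) t₁ (v k) (0, x)) ≤
      α / 2 * cA α (2 * T) t₁ * Y := by
    rw [hY, ← integral_const_mul]
    refine setIntegral_mono_on (integrable_finsetSum _ fun k _ => iD k 0 (by linarith)).neg ?_
      (measurableSet_BB _) fun x _ => dens_init hT hα ht₁
    have := (cont_NN hf).comp (Continuous.prodMk_right (Y := E3) (0 : ℝ))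
    refine ContinuousOn.integrableOn_compact (isCompact_BB ρ) (Continuous.continuousOn ?_)
    simp only [Function.comp_def] at this
    fun_prop
  have n2 := num2 (s := T₀ + t₁) hα ht₀ ht₀T (by linarith) (by linarith)
  have n3 := num3 (C := 300 * M ^ 2) hα ht₁ ht ht₀T hTα (by nlinarith)
  rw [← hA] at n2
  set B := (3 * t₀) ^ (3 / 2 + α) with hB
  have hB0 : 0 < B := by positivity
  have hAB : A * B = 1 := by
    rw [hA, hB, ← Real.rpow_add (by positivity)]; simp
  have e1 : Real.exp (-ρ ^ 2 / (500 * t₀)) = Real.exp (-(0.8 * α)) := by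
    congr 1; rw [hρα]; field_simp; norm_num
  have e2 : 300 * M ^ 2 * ρ ^ 2 / t₀ = 300 * M ^ 2 * (400 * α) := by
    rw [hρα]; field_simp
  have e3 : ∫ x in BB ρ, NN f (0, x) * t₁ ^ (-(3 : ℝ) / 2) * Real.exp (-‖x‖ ^ 2 / (4 * t₁)) =
      t₁ ^ (-(3 : ℝ) / 2) * Y := by
    rw [hY, ← integral_const_mul]
    congr 1; ext x; ring
  rw [e1, e2, e3]
  set P := (Real.exp 1 * t₀ / t₁) ^ (300 * M ^ 2 * (400 * α)) with hP
  have hP0 : 0 < P := by positivity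
  set E := Real.exp (-(0.8 * α)) with hE
  have step6 : t₀ / (4 * T) * A * LHS ≤ M ^ 2 / T * Λ * X +
      12 * M ^ 2 * (6 * (t₀ / T) * A * E) * X + α / 2 * cA α (2 * T) t₁ * Y := by
    have : 12 * M ^ 2 * (α * cA α (2 * T) (T₀ + t₁)) * X ≤
      12 * M ^ 2 * (6 * (t₀ / T) * A * E) * X := by gcongr
    linarith
  have step7 := mul_le_mul_of_nonneg_left step6 (show 0 ≤ 4 * T / t₀ * B by positivity)
  have l1 : 4 * T / t₀ * B * (t₀ / (4 * T) * A * LHS) = LHS := by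
    have : 4 * T / t₀ * B * (t₀ / (4 * T) * A * LHS) = (A * B) * LHS := by field_simp
    rw [this, hAB, one_mul]
  have l2 : 4 * T / t₀ * B * (M ^ 2 / T * Λ * X + 12 * M ^ 2 * (6 * (t₀ / T) * A * E) * X +
      α / 2 * cA α (2 * T) t₁ * Y) = 300 * M ^ 2 * (E * X) +
        4 * T / t₀ * B * (α / 2 * cA α (2 * T) t₁) * Y := by
    have : 4 * T / t₀ * B * (M ^ 2 / T * Λ * X + 12 * M ^ 2 * (6 * (t₀ / T) * A * E) * X +
      α / 2 * cA α (2 * T) t₁ * Y) = (A * B) * (300 * M ^ 2 * (E * X)) +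
        4 * T / t₀ * B * (α / 2 * cA α (2 * T) t₁) * Y := by
      rw [hΛ]; field_simp; ring
    rw [this, hAB, one_mul]
  rw [l1, l2] at step7
  have l3 := mul_le_mul_of_nonneg_right n3 hY0
  have l4 : 3 * (t₀ ^ ((3 : ℝ) / 2) * P * t₁ ^ (-(3 : ℝ) / 2)) * Y ≤
      300 * M ^ 2 * (t₀ ^ ((3 : ℝ) / 2) * P * t₁ ^ (-(3 : ℝ) / 2)) * Y := by
    gcongr
    linarith
  linarith

end


/-! ### Transfer to the original function -/

lemma transfer {g : ℝ → E3 → ℝ} {f : ℝ × E3 → ℝ} (hf : ContDiff ℝ (⊤ : ℕ∞) f) {t : ℝ} {x : E3}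
    (h : f =ᶠ[nhds (t, x)] fun z => g z.1 z.2) :
    g t x = f (t, x) ∧ (∀ i, pdg i (g t) x = dX i f (t, x)) ∧ bheat g t x = LL f (t, x) := by
  have hx : (fun y => f (t, y)) =ᶠ[nhds x] g t :=
    (Continuous.prodMk_right (Y := E3) t).continuousAt.eventually h
  have ht : (fun s => f (s, x)) =ᶠ[nhds t] fun s => g s x :=
    (Continuous.prodMk_left (X := ℝ) x).continuousAt.eventually h
  have hp : ∀ i, pdg i (fun y => f (t, y)) =ᶠ[nhds x] pdg i (g t) := fun i => by
    filter_upwards [hx.fderiv (𝕜 := ℝ)] with y hy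
    simp only [pdg, hy]
  refine ⟨h.eq_of_nhds.symm, fun i => ?_, ?_⟩
  · rw [← (hp i).eq_of_nhds, pdg_eq (smooth_diff hf)]
  · have e := bheat_eq hf t x
    have e2 : bheat (fun s y => f (s, y)) t x = bheat g t x := by
      unfold bheat tdg lapg
      rw [ht.deriv_eq]
      congr 1
      refine Finset.sum_congr rfl fun i _ => ?_
      have := (hp i).fderiv_eq (𝕜 := ℝ)
      exact congrArg (fun L : E3 →L[ℝ] ℝ => L (EuclideanSpace.single i 1)) this
    rw [← e2, e, Fin.sum_univ_three]
    rfl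

lemma sqrt_hyp {a N G T : ℝ} (hT : 0 < T) (ha : 0 ≤ a) (hN : 0 ≤ N) (hG : 0 ≤ G)
    (h : Real.sqrt a ≤ (8 * T)⁻¹ * Real.sqrt N + ((8 * T) ^ ((1 : ℝ) / 2))⁻¹ * Real.sqrt G) :
    a ≤ N / (32 * T ^ 2) + G / (4 * T) := by
  have h1 : a = Real.sqrt a ^ 2 := (Real.sq_sqrt ha).symm
  have h2 : Real.sqrt a ^ 2 ≤
    ((8 * T)⁻¹ * Real.sqrt N + ((8 * T) ^ ((1 : ℝ) / 2))⁻¹ * Real.sqrt G) ^ 2 := by gcongr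
  have h3 := add_sq_le (a := (8 * T)⁻¹ * Real.sqrt N)
    (b := ((8 * T) ^ ((1 : ℝ) / 2))⁻¹ * Real.sqrt G)
  have h4 : ((8 * T)⁻¹ * Real.sqrt N) ^ 2 = N / (64 * T ^ 2) := by
    rw [mul_pow, Real.sq_sqrt hN]; field_simp; ring
  have h5 : (((8 * T) ^ ((1 : ℝ) / 2))⁻¹ * Real.sqrt G) ^ 2 = G / (8 * T) := by
    rw [← Real.sqrt_eq_rpow, mul_pow, Real.sq_sqrt hG, inv_pow, Real.sq_sqrt (by positivity)]
    field_simp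
  rw [h4, h5] at h3
  have e1 : N / (32 * T ^ 2) = 2 * (N / (64 * T ^ 2)) := by field_simp; ring
  have e2 : G / (4 * T) = 2 * (G / (8 * T)) := by field_simp; ring
  rw [e1, e2]
  linarith

/-- Unique continuation Carleman inequality in a cylinder. -/
theorem statement17 :
    ∃ C₀ C : ℝ, 1 ≤ C₀ ∧ 1 ≤ C ∧
      ∀ (T ρ : ℝ) (u : ℝ → E3 → E3),
        0 < T → 0 < ρ → 4000 * T ≤ ρ ^ 2 →
        (∃ U : Set (ℝ × E3), IsOpen U ∧
          {z : ℝ × E3 | z.1 ∈ Icc 0 T ∧ ‖z.2‖ ≤ ρ} ⊆ U ∧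
          ContDiffOn ℝ (⊤ : ℕ∞) (fun z : ℝ × E3 => u z.1 z.2) U) →
        (∀ t ∈ Icc (0:ℝ) T, ∀ x : E3, ‖x‖ ≤ ρ →
          Real.sqrt (∑ k, (bheat (fun s y => u s y k) t x) ^ 2)
            ≤ (C₀ * T)⁻¹ * ‖u t x‖
              + ((C₀ * T) ^ ((1:ℝ)/2))⁻¹ *
                  Real.sqrt (∑ i, ∑ k, (pdg i (fun y => u t y k) x) ^ 2)) →
        ∀ t₁ t₀ : ℝ, 0 < t₁ → t₁ ≤ t₀ → t₀ ≤ T / 1000 →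
          (∫ t in Icc t₀ (2 * t₀), ∫ x in {x : E3 | ‖x‖ ≤ ρ/2},
              (T⁻¹ * ‖u t x‖ ^ 2 + ∑ i, ∑ k, (pdg i (fun y => u t y k) x) ^ 2)
                * Real.exp (-‖x‖ ^ 2 / (4 * t)))
            ≤ C * (Real.exp (-ρ ^ 2 / (500 * t₀)) *
                  (∫ t in Icc (0:ℝ) T, ∫ x in {x : E3 | ‖x‖ ≤ ρ},
                    (T⁻¹ * ‖u t x‖ ^ 2 + ∑ i, ∑ k, (pdg i (fun y => u t y k) x) ^ 2))
                + t₀ ^ ((3:ℝ)/2) * (Real.exp 1 * t₀ / t₁) ^ (C * ρ ^ 2 / t₀) *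
                  (∫ x in {x : E3 | ‖x‖ ≤ ρ},
                    ‖u 0 x‖ ^ 2 * t₁ ^ (-(3:ℝ)/2) * Real.exp (-‖x‖ ^ 2 / (4 * t₁)))) := by
  obtain ⟨M, hM, hMb⟩ := psi_bounds
  refine ⟨8, 300 * M ^ 2, by norm_num, by nlinarith, ?_⟩
  intro T ρ u hT hρ hTρ ⟨U, hU, hKU, hu⟩ hL t₁ t₀ ht₁ ht ht₀T
  have ht₀ : 0 < t₀ := by linarith
  have hK : IsClosed {z : ℝ × E3 | z.1 ∈ Icc 0 T ∧ ‖z.2‖ ≤ ρ} := by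
    refine IsClosed.inter (isClosed_Icc.preimage continuous_fst) ?_
    exact isClosed_le (f := fun z : ℝ × E3 => ‖z.2‖) (by fun_prop) continuous_const
  obtain ⟨F, hF, hFu⟩ := exists_global_ext hK hU hKU hu
  set f : Fin 3 → ℝ × E3 → ℝ := fun k z => F z k with hfdef
  have hf : ∀ k, ContDiff ℝ (⊤ : ℕ∞) (f k) := fun k => by
    simp only [hfdef]
    fun_prop
  have htr : ∀ t ∈ Icc (0 : ℝ) T, ∀ x : E3, ‖x‖ ≤ ρ →
      ‖u t x‖ ^ 2 = NN f (t, x) ∧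
      ∑ i, ∑ k, (pdg i (fun y => u t y k) x) ^ 2 = GR f (t, x) ∧
      ∑ k, (bheat (fun s y => u s y k) t x) ^ 2 = ∑ k, LL (f k) (t, x) ^ 2 := by
    intro t htt x hx
    have h := hFu (t, x) ⟨htt, hx⟩
    have hk : ∀ k, _ := fun k => transfer (g := fun s y => u s y k) (t := t) (x := x) (hf k)
      (h.mono fun z hz => by simp only [hfdef]; rw [hz])
    refine ⟨?_, ?_, ?_⟩
    · rw [EuclideanSpace.real_norm_sq_eq]
      exact Finset.sum_congr rfl fun k _ => by rw [← (hk k).1]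
    · rw [Finset.sum_comm]
      refine Finset.sum_congr rfl fun k _ => ?_
      rw [Fin.sum_univ_three, (hk k).2.1, (hk k).2.1, (hk k).2.1]
      rfl
    · exact Finset.sum_congr rfl fun k _ => by rw [(hk k).2.2]
  have hL' : ∀ z : ℝ × E3, z.1 ∈ Icc 0 T → ‖z.2‖ ≤ ρ →
      ∑ k, LL (f k) z ^ 2 ≤ NN f z / (32 * T ^ 2) + GR f z / (4 * T) := by
    rintro ⟨t, x⟩ h1 h2
    obtain ⟨e1, e2, e3⟩ := htr t h1 x h2
    have h := hL t h1 x h2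
    rw [e2, e3, ← Real.sqrt_sq (norm_nonneg (u t x)), e1] at h
    exact sqrt_hyp hT (Finset.sum_nonneg fun _ _ => sq_nonneg _) (NN_nonneg f _)
      (GR_nonneg f _) h
  have main := global_est hf hM (hMb ρ hρ) hρ hT hTρ ht₁ ht ht₀T hL'
  rw [setInt_prod (box_int hf ht₀), setInt_prod (intOn_prod' (cont_ener hf T) _ _ _)] at main
  have i1 : (∫ t in Icc t₀ (2 * t₀), ∫ x in {x : E3 | ‖x‖ ≤ ρ/2},
      (T⁻¹ * ‖u t x‖ ^ 2 + ∑ i, ∑ k, (pdg i (fun y => u t y k) x) ^ 2)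
        * Real.exp (-‖x‖ ^ 2 / (4 * t))) =
      ∫ t in Icc t₀ (2 * t₀), ∫ x in BB (ρ / 2),
        ener T f (t, x) * Real.exp (-‖x‖ ^ 2 / (4 * t)) := by
    refine setIntegral_congr_fun measurableSet_Icc fun t htt => ?_
    refine setIntegral_congr_fun (measurableSet_BB _) fun x hx => ?_
    have hx' : ‖x‖ ≤ ρ / 2 := hx
    obtain ⟨e1, e2, -⟩ := htr t ⟨by linarith [htt.1], by linarith [htt.2]⟩ x (by linarith)
    simp only
    rw [e1, e2]
    rfl
  have i2 : (∫ t in Icc (0:ℝ) T, ∫ x in {x : E3 | ‖x‖ ≤ ρ},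
      (T⁻¹ * ‖u t x‖ ^ 2 + ∑ i, ∑ k, (pdg i (fun y => u t y k) x) ^ 2)) =
      ∫ t in Icc (0:ℝ) T, ∫ x in BB ρ, ener T f (t, x) := by
    refine setIntegral_congr_fun measurableSet_Icc fun t htt => ?_
    refine setIntegral_congr_fun (measurableSet_BB _) fun x hx => ?_
    obtain ⟨e1, e2, -⟩ := htr t htt x hx
    simp only
    rw [e1, e2]
    rfl
  have i3 : (∫ x in {x : E3 | ‖x‖ ≤ ρ},
      ‖u 0 x‖ ^ 2 * t₁ ^ (-(3:ℝ)/2) * Real.exp (-‖x‖ ^ 2 / (4 * t₁))) =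
      ∫ x in BB ρ, NN f (0, x) * t₁ ^ (-(3 : ℝ) / 2) * Real.exp (-‖x‖ ^ 2 / (4 * t₁)) := by
    refine setIntegral_congr_fun (measurableSet_BB _) fun x hx => ?_
    obtain ⟨e1, -, -⟩ := htr 0 ⟨le_rfl, hT.le⟩ x hx
    rw [e1]
  rw [i1, i2, i3]
  exact main
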